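/- arXiv:0907.2758 — 5 statements merged into one kernel-verified Lean document; each statement's English description precedes it below -/
import Mathlib

section
/- Fix ℓ₀ > 0 and ε ∈ (0, 1/2]. For every sequence (a_k)_{k≥0} of real numbers with ∑_{k≥0} (1+λ_k) a_k² < ∞, one has ∑_{k≥0} b_{ε,k} a_k² ≥ ∑_{k≥0} a_k² + 3ε · ∑_{k≥0} λ_k a_k². -/
/-- `λ_k = (4π²/ℓ₀²)·⌈k/2⌉²`, the absolute values of the eigenvalues of the second
derivative operator with `ℓ₀`-periodic boundary conditions. -/
noncomputable def lam (ℓ₀ : ℝ) (k : ℕ) : ℝ :=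
  4 * Real.pi ^ 2 / ℓ₀ ^ 2 * (((k + 1) / 2 : ℕ) : ℝ) ^ 2

/-- `X_{ε,k} = √(1 + 4ελ_k)`. -/
noncomputable def Xe (ℓ₀ ε : ℝ) (k : ℕ) : ℝ := Real.sqrt (1 + 4 * ε * lam ℓ₀ k)

/-- The `k`-th Fourier symbol of the operator `𝓑_ε`. -/
noncomputable def bSym (ℓ₀ ε : ℝ) (k : ℕ) : ℝ :=
  3 / 4 * ((Xe ℓ₀ ε k + 1) * ((Xe ℓ₀ ε k) ^ 2 + 2 * Xe ℓ₀ ε k - 1)) / (Xe ℓ₀ ε k + 2)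

/-!
With `X = √(1 + 4ελ)`, the symbol splits as `b = 1 + 3ελ + (X - 1)(3X + 5) / (4(X + 2))`.
Since `X ≥ 1`, the remainder is nonnegative, which is the estimate mode by mode. Since `X - 1 ≤ 2ελ`
and the remaining factor is at most `3/4`, the symbol is also at most `1 + (9/2)ελ`, so that all
three series converge and the estimate may be summed.
-/

/-- The symbol of `𝓑_ε` as a function of the rescaled eigenvalue `t = ελ`; unlike `bSym` it does not
refer to a particular spectrum. -/
noncomputable def bProfile (t : ℝ) : ℝ :=
  3 / 4 * ((√(1 + 4 * t) + 1) * (√(1 + 4 * t) ^ 2 + 2 * √(1 + 4 * t) - 1)) / (√(1 + 4 * t) + 2)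

section bProfile

variable {t : ℝ}

theorem bProfile_eq_add_remainder (ht : 0 ≤ 1 + 4 * t) :
    bProfile t = 1 + 3 * t +
      (√(1 + 4 * t) - 1) * ((3 * √(1 + 4 * t) + 5) / (4 * (√(1 + 4 * t) + 2))) := by
  have hX : 0 ≤ √(1 + 4 * t) := Real.sqrt_nonneg _
  have ht_eq : t = (√(1 + 4 * t) ^ 2 - 1) / 4 := by rw [Real.sq_sqrt ht]; ring
  unfold bProfile
  generalize √(1 + 4 * t) = X at hX ht_eq ⊢
  rw [ht_eq]
  field_simp
  ring

theorem one_add_three_mul_le_bProfile (ht : 0 ≤ t) : 1 + 3 * t ≤ bProfile t := by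
  have hX : 0 ≤ √(1 + 4 * t) - 1 := sub_nonneg.2 (Real.one_le_sqrt.2 (by linarith))
  rw [bProfile_eq_add_remainder (by linarith)]
  exact le_add_of_nonneg_right (by positivity)

theorem bProfile_le_one_add_nine_halves_mul (ht : 0 ≤ t) : bProfile t ≤ 1 + 9 / 2 * t := by
  have hX_sub : √(1 + 4 * t) - 1 ≤ 2 * t := by
    linarith [Real.sqrt_one_add_le (x := 4 * t) (by linarith)]
  have hfactor : (3 * √(1 + 4 * t) + 5) / (4 * (√(1 + 4 * t) + 2)) ≤ 3 / 4 := by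
    rw [div_le_iff₀ (by positivity)]
    linarith
  calc bProfile t
      = 1 + 3 * t + (√(1 + 4 * t) - 1) * ((3 * √(1 + 4 * t) + 5) / (4 * (√(1 + 4 * t) + 2))) :=
        bProfile_eq_add_remainder (by linarith)
    _ ≤ 1 + 3 * t + 2 * t * (3 / 4) := by gcongr
    _ = 1 + 9 / 2 * t := by ring

end bProfile

section Summation

variable {ι : Type*} {ε : ℝ} {μ a : ι → ℝ}

theorem summable_sq_of_summable_one_add_mul_sq (hμ : ∀ i, 0 ≤ μ i)
    (hsum : Summable fun i => (1 + μ i) * a i ^ 2) : Summable fun i => a i ^ 2 :=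
  hsum.of_nonneg_of_le (fun i => sq_nonneg (a i)) fun i =>
    le_mul_of_one_le_left (sq_nonneg (a i)) (le_add_of_nonneg_right (hμ i))

theorem summable_mul_sq_of_summable_one_add_mul_sq (hμ : ∀ i, 0 ≤ μ i)
    (hsum : Summable fun i => (1 + μ i) * a i ^ 2) : Summable fun i => μ i * a i ^ 2 :=
  hsum.of_nonneg_of_le (fun i => mul_nonneg (hμ i) (sq_nonneg (a i))) fun i =>
    mul_le_mul_of_nonneg_right (le_add_of_nonneg_left zero_le_one) (sq_nonneg (a i))

theorem summable_bProfile_mul_sq (hε : 0 ≤ ε) (hμ : ∀ i, 0 ≤ μ i)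
    (hsum : Summable fun i => (1 + μ i) * a i ^ 2) :
    Summable fun i => bProfile (ε * μ i) * a i ^ 2 := by
  have ht (i : ι) : 0 ≤ ε * μ i := mul_nonneg hε (hμ i)
  have hbound : Summable fun i => a i ^ 2 + 9 / 2 * ε * (μ i * a i ^ 2) :=
    (summable_sq_of_summable_one_add_mul_sq hμ hsum).add
      ((summable_mul_sq_of_summable_one_add_mul_sq hμ hsum).mul_left _)
  refine hbound.of_nonneg_of_le (fun i => ?_) fun i => ?_
  · have hpos : 0 ≤ bProfile (ε * μ i) := by linarith [one_add_three_mul_le_bProfile (ht i), ht i]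
    positivity
  · calc bProfile (ε * μ i) * a i ^ 2
        ≤ (1 + 9 / 2 * (ε * μ i)) * a i ^ 2 := by
          gcongr
          exact bProfile_le_one_add_nine_halves_mul (ht i)
      _ = a i ^ 2 + 9 / 2 * ε * (μ i * a i ^ 2) := by ring

theorem bSym_coercivity_general (hε : 0 ≤ ε) (hμ : ∀ i, 0 ≤ μ i)
    (hsum : Summable fun i => (1 + μ i) * a i ^ 2) :
    (∑' i, a i ^ 2) + 3 * ε * ∑' i, μ i * a i ^ 2 ≤ ∑' i, bProfile (ε * μ i) * a i ^ 2 := by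
  have hsq := summable_sq_of_summable_one_add_mul_sq hμ hsum
  have hμsq := (summable_mul_sq_of_summable_one_add_mul_sq hμ hsum).mul_left (3 * ε)
  have hmode (i : ι) :
      a i ^ 2 + 3 * ε * (μ i * a i ^ 2) ≤ bProfile (ε * μ i) * a i ^ 2 := by
    calc a i ^ 2 + 3 * ε * (μ i * a i ^ 2)
        = (1 + 3 * (ε * μ i)) * a i ^ 2 := by ring
      _ ≤ bProfile (ε * μ i) * a i ^ 2 := by
        gcongr
        exact one_add_three_mul_le_bProfile (mul_nonneg hε (hμ i))
  rw [← tsum_mul_left, ← hsq.tsum_add hμsq]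
  exact (hsq.add hμsq).tsum_le_tsum hmode (summable_bProfile_mul_sq hε hμ hsum)

end Summation

theorem lam_nonneg (ℓ₀ : ℝ) (k : ℕ) : 0 ≤ lam ℓ₀ k := by
  unfold lam
  positivity

theorem bSym_eq_bProfile (ℓ₀ ε : ℝ) (k : ℕ) : bSym ℓ₀ ε k = bProfile (ε * lam ℓ₀ k) := by
  simp only [bSym, Xe, bProfile, mul_assoc]

/-- the coercivity estimate for `𝓑_ε` in Fourier variables:
`∑ b_{ε,k} a_k² ≥ ∑ a_k² + 3ε ∑ λ_k a_k²` whenever `∑ (1+λ_k) a_k² < ∞`. -/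
theorem bSym_coercivity (ℓ₀ ε : ℝ) (hℓ₀ : 0 < ℓ₀) (hε : ε ∈ Set.Ioc (0 : ℝ) (1 / 2))
    (a : ℕ → ℝ) (hsum : Summable fun k : ℕ => (1 + lam ℓ₀ k) * a k ^ 2) :
    (∑' k : ℕ, a k ^ 2) + 3 * ε * ∑' k : ℕ, lam ℓ₀ k * a k ^ 2 ≤
      ∑' k : ℕ, bSym ℓ₀ ε k * a k ^ 2 := by
  simp only [bSym_eq_bProfile]
  exact bSym_coercivity_general hε.1.le (lam_nonneg ℓ₀) hsum
end

section
/- Fix ℓ₀ > 0 and ε ∈ (0, 1/2]. Define z_{ε,k} = −(2/3)·λ_k·(3X_{ε,k}²+15X_{ε,k}+4)/((X_{ε,k}+1)²(X_{ε,k}²+2X_{ε,k}−1)). Then z_{ε,k} + 1/(2ε) is asymptotically equivalent to −1/(4√(ε³λ_k)) as k → ∞; that is, the product (z_{ε,k} + 1/(2ε))·(−4√(ε³λ_k)) tends to 1 as k → ∞. -/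
open Filter

/-- The `k`-th Fourier symbol of the operator `𝓩_ε = 𝓑_ε⁻¹𝓖_ε`. -/
noncomputable def zSym (ℓ₀ ε : ℝ) (k : ℕ) : ℝ :=
  -(2 / 3) * lam ℓ₀ k * (3 * (Xe ℓ₀ ε k) ^ 2 + 15 * Xe ℓ₀ ε k + 4) /
    ((Xe ℓ₀ ε k + 1) ^ 2 * ((Xe ℓ₀ ε k) ^ 2 + 2 * Xe ℓ₀ ε k - 1))

/-!
In terms of `x = √(1 + 4εs)` the spectral parameter is `s = (x² - 1) / (4ε)`, so the factor `x + 1`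
cancels from the symbol and the terms of order `x³` drop out of the numerator of
`z + 1 / (2ε) = -(3x² - 14x - 1) / (6ε (x + 1) (x² + 2x - 1))`. This behaves like `-1 / (2εx)`,
while `√(ε³s) = (ε / 2) √(x² - 1)` behaves like `εx / 2`.
-/

/-- The Fourier symbol of `𝓩_ε` as a function of a real spectral parameter `s`, so that
`zSym ℓ₀ ε k` is definitionally `zSymbol ε (lam ℓ₀ k)`. It lets asymptotics be taken as `s → ∞`
through the reals, independently of the sequence of eigenvalues. -/
noncomputable def zSymbol (ε s : ℝ) : ℝ :=
  -(2 / 3) * s * (3 * √(1 + 4 * ε * s) ^ 2 + 15 * √(1 + 4 * ε * s) + 4) /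
    ((√(1 + 4 * ε * s) + 1) ^ 2 * (√(1 + 4 * ε * s) ^ 2 + 2 * √(1 + 4 * ε * s) - 1))

lemma tendsto_lam_atTop {ℓ₀ : ℝ} (hℓ₀ : ℓ₀ ≠ 0) : Tendsto (lam ℓ₀) atTop atTop := by
  have tendsto_half : Tendsto (fun k : ℕ => (k + 1) / 2) atTop atTop :=
    (Nat.tendsto_div_const_atTop two_ne_zero).comp (tendsto_add_atTop_nat 1)
  exact ((tendsto_pow_atTop two_ne_zero).comp
    (tendsto_natCast_atTop_atTop.comp tendsto_half)).const_mul_atTop (by positivity)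

lemma tendsto_sqrt_one_add_mul_atTop {c : ℝ} (hc : 0 < c) :
    Tendsto (fun s : ℝ => √(1 + c * s)) atTop atTop :=
  Real.tendsto_sqrt_atTop.comp
    (tendsto_atTop_add_const_left _ _ (tendsto_id.const_mul_atTop hc))

lemma tendsto_sqrt_sq_add_const_div_self (c : ℝ) :
    Tendsto (fun x : ℝ => √(x ^ 2 + c) / x) atTop (nhds 1) := by
  have continuousAt_zero : ContinuousAt (fun y : ℝ => √(1 + c * y ^ 2)) 0 := by fun_prop
  have tendsto_one : Tendsto (fun x : ℝ => √(1 + c * x⁻¹ ^ 2)) atTop (nhds 1) := by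
    simpa [Function.comp_def] using continuousAt_zero.tendsto.comp tendsto_inv_atTop_zero
  refine tendsto_one.congr' ?_
  filter_upwards [eventually_gt_atTop 0] with x x_pos
  calc √(1 + c * x⁻¹ ^ 2) = √((x ^ 2 + c) / x ^ 2) := by congr 1; field_simp
    _ = √(x ^ 2 + c) / x := by rw [Real.sqrt_div' _ (sq_nonneg x), Real.sqrt_sq x_pos.le]

lemma tendsto_cubic_div_cubic_atTop (P Q : Cubic ℝ) (hP : P.a ≠ 0) (hQ : Q.a ≠ 0) :
    Tendsto (fun x : ℝ => (P.a * x ^ 3 + P.b * x ^ 2 + P.c * x + P.d) /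
      (Q.a * x ^ 3 + Q.b * x ^ 2 + Q.c * x + Q.d)) atTop (nhds (P.a / Q.a)) := by
  have degree_eq : P.toPoly.degree = Q.toPoly.degree := by
    rw [Cubic.degree_of_a_ne_zero hP, Cubic.degree_of_a_ne_zero hQ]
  have tendsto_eval :=
    Polynomial.div_tendsto_atTop_leadingCoeff_div_of_degree_eq P.toPoly Q.toPoly degree_eq
  rw [Cubic.leadingCoeff_of_a_ne_zero hP, Cubic.leadingCoeff_of_a_ne_zero hQ] at tendsto_eval
  simpa [Cubic.toPoly] using tendsto_eval

section SpectralParameter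

variable {ε s : ℝ}

lemma eq_sq_sqrt_sub_one_div (hε : 0 < ε) (hs : 0 ≤ s) :
    s = (√(1 + 4 * ε * s) ^ 2 - 1) / (4 * ε) := by
  rw [Real.sq_sqrt (by positivity)]
  field_simp
  ring

lemma zSymbol_add_one_div_two_mul (hε : 0 < ε) (hs : 0 ≤ s) :
    zSymbol ε s + 1 / (2 * ε) =
      -(3 * √(1 + 4 * ε * s) ^ 2 - 14 * √(1 + 4 * ε * s) - 1) /
        (6 * ε * (√(1 + 4 * ε * s) + 1) *
          (√(1 + 4 * ε * s) ^ 2 + 2 * √(1 + 4 * ε * s) - 1)) := by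
  have s_eq := eq_sq_sqrt_sub_one_div hε hs
  have one_le_sqrt : 1 ≤ √(1 + 4 * ε * s) :=
    Real.one_le_sqrt.mpr (le_add_of_nonneg_right (by positivity))
  unfold zSymbol
  generalize √(1 + 4 * ε * s) = x at s_eq one_le_sqrt ⊢
  have linear_ne_zero : x + 1 ≠ 0 := by positivity
  have quadratic_ne_zero : x * (x + 2) - 1 ≠ 0 := by nlinarith
  rw [s_eq]
  field_simp
  ring

lemma sqrt_pow_three_mul (hε : 0 < ε) (hs : 0 ≤ s) :
    √(ε ^ 3 * s) = ε / 2 * √(√(1 + 4 * ε * s) ^ 2 - 1) := by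
  calc √(ε ^ 3 * s) = √((ε / 2) ^ 2 * (√(1 + 4 * ε * s) ^ 2 - 1)) := by
        rw [Real.sq_sqrt (by positivity)]; ring_nf
    _ = ε / 2 * √(√(1 + 4 * ε * s) ^ 2 - 1) := by
        rw [Real.sqrt_mul (by positivity), Real.sqrt_sq (by positivity)]

end SpectralParameter

theorem zSym_asymptotic_general {ε : ℝ} (hε : 0 < ε) :
    Tendsto (fun s : ℝ => (zSymbol ε s + 1 / (2 * ε)) * (-4 * √(ε ^ 3 * s))) atTop (nhds 1) := by
  have tendsto_x : Tendsto (fun s : ℝ => √(1 + 4 * ε * s)) atTop atTop :=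
    tendsto_sqrt_one_add_mul_atTop (by positivity)
  have tendsto_ratio : Tendsto (fun x : ℝ =>
      (3 * x ^ 2 - 14 * x - 1) * x / (3 * (x + 1) * (x ^ 2 + 2 * x - 1))) atTop (nhds 1) := by
    convert! tendsto_cubic_div_cubic_atTop ⟨3, -14, -1, 0⟩ ⟨3, 9, 3, -3⟩ three_ne_zero
      three_ne_zero using 3 <;> ring
  have tendsto_product := (tendsto_ratio.mul
    (tendsto_sqrt_sq_add_const_div_self (-1))).comp tendsto_x
  rw [one_mul] at tendsto_product
  refine tendsto_product.congr' ?_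
  filter_upwards [eventually_ge_atTop 0] with s s_nonneg
  have x_pos : 0 < √(1 + 4 * ε * s) := Real.sqrt_pos.mpr (by positivity)
  rw [zSymbol_add_one_div_two_mul hε s_nonneg, sqrt_pow_three_mul hε s_nonneg]
  simp only [Function.comp_apply, ← sub_eq_add_neg]
  generalize √(1 + 4 * ε * s) = x at x_pos ⊢
  field_simp
  ring

/-- `z_{ε,k} + 1/(2ε) ∼ −1/(4√(ε³λ_k))` as `k → ∞`. -/
theorem zSym_asymptotic (ℓ₀ ε : ℝ) (hℓ₀ : 0 < ℓ₀) (hε : ε ∈ Set.Ioc (0 : ℝ) (1 / 2)) :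
    Tendsto (fun k : ℕ =>
        (zSym ℓ₀ ε k + 1 / (2 * ε)) * (-4 * Real.sqrt (ε ^ 3 * lam ℓ₀ k)))
      atTop (nhds 1) :=
  (zSym_asymptotic_general hε.1).comp (tendsto_lam_atTop hℓ₀.ne')
end

section
/- Let A₀, C₀, C₁, C₂ be positive constants. For any T > 0, there exist ε₀ ∈ (0, 1/2) and a constant K₀ > 0 such that the following holds: for every T' ∈ (0, T], every ε ∈ (0, ε₀], and every continuously differentiable function A : [0, T'] → ℝ satisfying A'(τ) ≤ C₀ + C₁·A(τ) + C₂·ε·(A(τ))² for all τ ∈ [0, T'] and A(0) ≤ A₀, one has A(τ) ≤ K₀ for all τ ∈ [0, T']. -/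
/-!
Where `A` touches an exponential barrier `B τ = M * exp (k * τ)` with `M ≥ 1`, the right-hand side
`C₀ + C₁ * B + C₂ * ε * B ^ 2` is smaller than `k * B = B'` as soon as `k = |C₀| + |C₁| + 1` and
`C₂ * ε * B < 1`. Since `B` is bounded on `[0, T]` independently of `ε`, the last condition holds
for all small `ε`, and `A` can then never cross the barrier.
-/

open Set Real

section ExponentialBarrier

variable {f f' : ℝ → ℝ} {a b M : ℝ}

theorem le_mul_exp_of_deriv_right_lt_mul {k : ℝ} (hM : 0 ≤ M) (hk : 0 ≤ k)
    (hf : ContinuousOn f (Icc a b))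
    (hf' : ∀ x ∈ Ico a b, HasDerivWithinAt f (f' x) (Ici x) x)
    (ha : f a ≤ M)
    (bound : ∀ x ∈ Ico a b, f x ∈ Icc M (M * exp (k * (b - a))) → f' x < k * f x) :
    ∀ x ∈ Icc a b, f x ≤ M * exp (k * (x - a)) := by
  have barrier_deriv (x : ℝ) :
      HasDerivAt (fun y ↦ M * exp (k * (y - a))) (k * (M * exp (k * (x - a)))) x :=
    ((((hasDerivAt_id' x).sub_const a).const_mul k).exp.const_mul M).congr_deriv (by ring)
  refine image_le_of_deriv_right_lt_deriv_boundary hf hf' (by simpa using ha) barrier_deriv ?_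
  intro x hx touch
  have one_le : 1 ≤ exp (k * (x - a)) := one_le_exp (mul_nonneg hk (sub_nonneg.2 hx.1))
  have le_end : M * exp (k * (x - a)) ≤ M * exp (k * (b - a)) := by
    gcongr
    exact hx.2.le
  rw [← touch] at le_end ⊢
  exact bound x hx ⟨touch ▸ le_mul_of_one_le_right hM one_le, le_end⟩

theorem quadratic_lt_mul_of_one_le {c₀ c₁ δ y : ℝ} (hy : 1 ≤ y) (hδ : δ * y < 1) :
    c₀ + c₁ * y + δ * y ^ 2 < (|c₀| + |c₁| + 1) * y := by
  have y_pos : 0 < y := one_pos.trans_le hy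
  have constant_term : c₀ ≤ |c₀| * y :=
    (le_abs_self c₀).trans (le_mul_of_one_le_right (abs_nonneg c₀) hy)
  have linear_term : c₁ * y ≤ |c₁| * y := mul_le_mul_of_nonneg_right (le_abs_self c₁) y_pos.le
  have quadratic_term : δ * y ^ 2 < 1 * y := by
    calc δ * y ^ 2 = δ * y * y := by ring
      _ < 1 * y := mul_lt_mul_of_pos_right hδ y_pos
  linarith

theorem le_mul_exp_of_deriv_right_le_quadratic {c₀ c₁ δ : ℝ} (hM : 1 ≤ M)
    (hδ : |δ| * (M * exp ((|c₀| + |c₁| + 1) * (b - a))) < 1)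
    (hf : ContinuousOn f (Icc a b))
    (hf' : ∀ x ∈ Ico a b, HasDerivWithinAt f (f' x) (Ici x) x)
    (ha : f a ≤ M)
    (bound : ∀ x ∈ Ico a b, f' x ≤ c₀ + c₁ * f x + δ * f x ^ 2) :
    ∀ x ∈ Icc a b, f x ≤ M * exp ((|c₀| + |c₁| + 1) * (x - a)) := by
  refine le_mul_exp_of_deriv_right_lt_mul (zero_le_one.trans hM) (by positivity) hf hf' ha ?_
  intro x hx hfx
  have one_le : 1 ≤ f x := hM.trans hfx.1
  refine (bound x hx).trans_lt (quadratic_lt_mul_of_one_le one_le ?_)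
  calc δ * f x ≤ |δ| * f x := by
        gcongr
        exact le_abs_self δ
    _ ≤ |δ| * (M * exp ((|c₀| + |c₁| + 1) * (b - a))) := by
        gcongr
        exact hfx.2
    _ < 1 := hδ

end ExponentialBarrier

theorem exists_mem_Ioo_forall_abs_mul_lt_one (C : ℝ) {r : ℝ} (hr : 0 < r) :
    ∃ ε₀ ∈ Ioo 0 r, ∀ ε, |ε| ≤ ε₀ → |ε * C| < 1 := by
  have denominator_pos : 0 < |C| + r⁻¹ + 1 := by positivity
  refine ⟨(|C| + r⁻¹ + 1)⁻¹, ⟨by positivity, ?_⟩, fun ε hε ↦ ?_⟩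
  · exact inv_lt_of_inv_lt₀ hr (by linarith [abs_nonneg C])
  · calc |ε * C| = |ε| * |C| := abs_mul ε C
      _ ≤ (|C| + r⁻¹ + 1)⁻¹ * |C| := by gcongr
      _ < 1 := by
        rw [inv_mul_lt_one₀ denominator_pos]
        linarith [inv_pos.2 hr]

theorem differential_inequality_lemma_general (A₀ C₀ C₁ C₂ T : ℝ) :
    ∃ ε₀ ∈ Ioo (0 : ℝ) (1 / 2), ∃ K₀ : ℝ, 0 < K₀ ∧
      ∀ T' ≤ T, ∀ ε, |ε| ≤ ε₀ → ∀ A A' : ℝ → ℝ,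
        ContinuousOn A (Icc 0 T') →
        (∀ τ ∈ Ico 0 T', HasDerivWithinAt A (A' τ) (Ici τ) τ) →
        (∀ τ ∈ Ico 0 T', A' τ ≤ C₀ + C₁ * A τ + C₂ * ε * A τ ^ 2) →
        A 0 ≤ A₀ →
        ∀ τ ∈ Icc 0 T', A τ ≤ K₀ := by
  set M := max A₀ 1
  set k := |C₀| + |C₁| + 1
  have M_pos : 0 < M := one_pos.trans_le (le_max_right _ _)
  have barrier_le {t : ℝ} (ht : t ≤ T) : M * exp (k * (t - 0)) ≤ M * exp (k * T) := by
    rw [sub_zero]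
    gcongr
  set K := M * exp (k * T)
  have K_pos : 0 < K := mul_pos M_pos (exp_pos _)
  obtain ⟨ε₀, hε₀, small⟩ := exists_mem_Ioo_forall_abs_mul_lt_one (C₂ * K) one_half_pos
  refine ⟨ε₀, hε₀, K, K_pos, fun T' hT' ε hε A A' hA hA' bound h0 τ hτ ↦ ?_⟩
  have quadratic_small : |C₂ * ε| * (M * exp (k * (T' - 0))) < 1 :=
    calc |C₂ * ε| * (M * exp (k * (T' - 0))) ≤ |C₂ * ε| * K :=
          mul_le_mul_of_nonneg_left (barrier_le hT') (abs_nonneg _)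
      _ = |C₂ * ε * K| := by rw [abs_mul (C₂ * ε), abs_of_pos K_pos]
      _ = |ε * (C₂ * K)| := by ring_nf
      _ < 1 := small ε hε
  calc A τ ≤ M * exp (k * (τ - 0)) :=
        le_mul_exp_of_deriv_right_le_quadratic (le_max_right _ _) quadratic_small hA hA'
          (h0.trans (le_max_left _ _)) bound τ hτ
    _ ≤ K := barrier_le (hτ.2.trans hT')

/-- Lemma 6.6: a differential-inequality comparison lemma. For positive
constants `A₀, C₀, C₁, C₂` and any `T > 0` there exist `ε₀ ∈ (0,1/2)` and `K₀ > 0` such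
that any `C¹` function `A` on `[0,T']` `(0 < T' ≤ T)` with
`A'(τ) ≤ C₀ + C₁ A(τ) + C₂ ε A(τ)²` and `A(0) ≤ A₀` satisfies `A(τ) ≤ K₀` on `[0,T']`,
whenever `0 < ε ≤ ε₀`. -/
theorem differential_inequality_lemma (A₀ C₀ C₁ C₂ : ℝ)
    (hA₀ : 0 < A₀) (hC₀ : 0 < C₀) (hC₁ : 0 < C₁) (hC₂ : 0 < C₂)
    (T : ℝ) (hT : 0 < T) :
    ∃ ε₀ ∈ Set.Ioo (0 : ℝ) (1 / 2), ∃ K₀ : ℝ, 0 < K₀ ∧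
      ∀ T' ∈ Set.Ioc (0 : ℝ) T, ∀ ε ∈ Set.Ioc (0 : ℝ) ε₀, ∀ A A' : ℝ → ℝ,
        (∀ τ ∈ Set.Icc (0 : ℝ) T', HasDerivWithinAt A (A' τ) (Set.Icc (0 : ℝ) T') τ) →
        ContinuousOn A' (Set.Icc (0 : ℝ) T') →
        (∀ τ ∈ Set.Icc (0 : ℝ) T', A' τ ≤ C₀ + C₁ * A τ + C₂ * ε * (A τ) ^ 2) →
        A 0 ≤ A₀ →
        ∀ τ ∈ Set.Icc (0 : ℝ) T', A τ ≤ K₀ := by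
  obtain ⟨ε₀, hε₀, K₀, hK₀, h⟩ := differential_inequality_lemma_general A₀ C₀ C₁ C₂ T
  exact ⟨ε₀, hε₀, K₀, hK₀, fun T' hT' ε hε A A' hA _ bound ↦
    h T' hT'.2 ε ((abs_of_pos hε.1).trans_le hε.2) A A' (fun τ hτ ↦ (hA τ hτ).continuousWithinAt)
      (fun τ hτ ↦ (hA τ (Ico_subset_Icc_self hτ)).mono_of_mem_nhdsWithin
        (Icc_mem_nhdsGE_of_mem hτ))
      (fun τ hτ ↦ bound τ (Ico_subset_Icc_self hτ))⟩
end

section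
/- Fix ℓ₀ > 0 and α ∈ (0, 1/2). Let Φ₀ : [−ℓ₀/2, ℓ₀/2] → ℝ be six times continuously differentiable, with its sixth derivative α-Hölder continuous, and with D_η^{(k)}Φ₀(−ℓ₀/2) = D_η^{(k)}Φ₀(ℓ₀/2) for every k = 0, 1, …, 6. Then there exists a unique function Φ : [0, ∞) × [−ℓ₀/2, ℓ₀/2] → ℝ of class C^{1,4} (once continuously differentiable in τ and four times continuously differentiable in η, with all these derivatives jointly continuous) such that: (i) Φ_τ(τ,η) = −3Φ_ηηηη(τ,η) − Φ_ηη(τ,η) − (1/2)(Φ_η(τ,η))² for all τ ≥ 0 and |η| ≤ ℓ₀/2; (ii) D_η^{(k)}Φ(τ,−ℓ₀/2) = D_η^{(k)}Φ(τ,ℓ₀/2) for all τ ≥ 0 and k = 0,1,2,3; (iii) Φ(0,η) = Φ₀(η) for all |η| ≤ ℓ₀/2. -/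
open Set

/-- The spatial interval `[−ℓ₀/2, ℓ₀/2]`. -/
def Iℓ (ℓ₀ : ℝ) : Set ℝ := Icc (-(ℓ₀ / 2)) (ℓ₀ / 2)

/-- `Φ : [0,∞) × [−ℓ₀/2, ℓ₀/2] → ℝ` is a `C^{1,4}` solution of the Kuramoto–Sivashinsky
equation `Φ_τ = −3Φ_ηηηη − Φ_ηη − (1/2)(Φ_η)²` with `ℓ₀`-periodic boundary conditions and
initial datum `Φ₀`.  The function `Φτ` is the time derivative, and `D j` is the `j`-th
spatial derivative (`D 0 = Φ`); all of them are jointly continuous on the domain. -/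
def IsKSSolution (ℓ₀ : ℝ) (Φ₀ : ℝ → ℝ) (Φ : ℝ → ℝ → ℝ) : Prop :=
  ∃ Φτ : ℝ → ℝ → ℝ, ∃ D : ℕ → ℝ → ℝ → ℝ,
    D 0 = Φ ∧
    (∀ τ ∈ Ici (0 : ℝ), ∀ η ∈ Iℓ ℓ₀,
      HasDerivWithinAt (fun t => Φ t η) (Φτ τ η) (Ici (0 : ℝ)) τ) ∧
    (∀ j < 4, ∀ τ ∈ Ici (0 : ℝ), ∀ η ∈ Iℓ ℓ₀,
      HasDerivWithinAt (fun y => D j τ y) (D (j + 1) τ η) (Iℓ ℓ₀) η) ∧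
    ContinuousOn (fun p : ℝ × ℝ => Φτ p.1 p.2) (Ici (0 : ℝ) ×ˢ Iℓ ℓ₀) ∧
    (∀ j ≤ 4, ContinuousOn (fun p : ℝ × ℝ => D j p.1 p.2) (Ici (0 : ℝ) ×ˢ Iℓ ℓ₀)) ∧
    (∀ τ ∈ Ici (0 : ℝ), ∀ η ∈ Iℓ ℓ₀,
      Φτ τ η = -3 * D 4 τ η - D 2 τ η - 1 / 2 * (D 1 τ η) ^ 2) ∧
    (∀ τ ∈ Ici (0 : ℝ), ∀ j ≤ 3, D j τ (-(ℓ₀ / 2)) = D j τ (ℓ₀ / 2)) ∧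
    (∀ η ∈ Iℓ ℓ₀, Φ 0 η = Φ₀ η)

/-!
Uniqueness is an energy estimate. The difference `w` of two solutions satisfies a linear equation
`w_τ = -3 w_ηηηη - w_ηη - q w_η`, so `∫ w²` obeys Grönwall's inequality.

Existence is proved on the Fourier side. Integrating against a Galerkin gradient `v = Φ_η` kills the
nonlinear term, because the integral of `v² v_η` over a period vanishes, so the `ℓ²` norm of the
coefficients of `v` grows at most exponentially, uniformly in the truncation. By Duhamel's formula
the linear flow gains four orders of decay of the coefficients, so all truncations satisfy a common
`O(|k|⁻⁴)` bound; a diagonal subsequence converges to a solution of Duhamel's formula. A second pass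
through that formula propagates the `O(|k|⁻⁶)` decay of the coefficients of a `C⁶` datum, and with
this decay the Fourier series may be differentiated termwise to the order the equation needs.
-/

namespace KS

open Filter MeasureTheory Topology ComplexConjugate

/-! ### Calculus -/

theorem le_exp_mul_of_hasDerivAt_le {f f' : ℝ → ℝ} {a b C : ℝ} (hab : a ≤ b)
    (hf : ContinuousOn f (Icc a b)) (hf' : ∀ t ∈ Ioo a b, HasDerivAt f (f' t) t)
    (hle : ∀ t ∈ Ioo a b, f' t ≤ C * f t) : f b ≤ Real.exp (C * (b - a)) * f a := by
  have hderiv : ∀ t ∈ interior (Icc a b), HasDerivAt (fun t => Real.exp (C * (b - t)) * f t)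
      (Real.exp (C * (b - t)) * (f' t - C * f t)) t := by
    intro t ht
    rw [interior_Icc] at ht
    have hexp := (((hasDerivAt_id t).const_sub b).const_mul C).exp
    exact (hexp.mul (hf' t ht)).congr_deriv (by simp only [id]; ring)
  have hanti : AntitoneOn (fun t => Real.exp (C * (b - t)) * f t) (Icc a b) := by
    refine antitoneOn_of_deriv_nonpos (convex_Icc a b) (by fun_prop)
      (fun t ht => (hderiv t ht).differentiableAt.differentiableWithinAt) fun t ht => ?_
    rw [(hderiv t ht).deriv]
    rw [interior_Icc] at ht
    exact mul_nonpos_of_nonneg_of_nonpos (Real.exp_pos _).le (sub_nonpos.2 (hle t ht))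
  simpa using hanti (left_mem_Icc.2 hab) (right_mem_Icc.2 hab) hab

theorem hasDerivWithinAt_Ici_of_continuousOn {E : Type*} [NormedAddCommGroup E]
    [NormedSpace ℝ E] {f f' : ℝ → E} {a : ℝ} (hf : ContinuousOn f (Ici a))
    (hf' : ContinuousOn f' (Ici a)) (hderiv : ∀ t ∈ Ioi a, HasDerivAt f (f' t) t) {t : ℝ}
    (ht : t ∈ Ici a) : HasDerivWithinAt f (f' t) (Ici a) t := by
  rcases eq_or_lt_of_le (mem_Ici.1 ht) with rfl | hat
  · refine hasDerivWithinAt_Ici_of_tendsto_deriv (s := Ioi a)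
      (fun t ht => (hderiv t ht).differentiableAt.differentiableWithinAt)
      ((hf a self_mem_Ici).mono Ioi_subset_Ici_self) self_mem_nhdsWithin ?_
    refine Tendsto.congr' ?_ ((hf' a self_mem_Ici).mono Ioi_subset_Ici_self)
    filter_upwards [self_mem_nhdsWithin] with t ht using (hderiv t ht).deriv.symm
  · exact (hderiv t hat).hasDerivWithinAt

theorem continuousOn_tsum_of_locally_bounded {ι X E : Type*} [TopologicalSpace X]
    [NormedAddCommGroup E] [CompleteSpace E] {F : ι → X → E} {s : Set X}
    (hF : ∀ i, ContinuousOn (F i) s)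
    (hbound : ∀ x ∈ s, ∃ U, IsOpen U ∧ x ∈ U ∧ ∃ B : ι → ℝ, Summable B ∧
      ∀ i, ∀ y ∈ s ∩ U, ‖F i y‖ ≤ B i) :
    ContinuousOn (fun x => ∑' i, F i x) s :=
  continuousOn_of_locally_continuousOn fun x hx =>
    let ⟨U, hU, hxU, _, hB, hFB⟩ := hbound x hx
    ⟨U, hU, hxU, continuousOn_tsum (fun i => (hF i).mono inter_subset_left) hB hFB⟩

section IntervalIntegral

variable {E : Type*} [NormedAddCommGroup E] [NormedSpace ℝ E] {a b : ℝ}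

theorem continuousOn_intervalIntegral_of_continuousOn_prod {X : Type*} [TopologicalSpace X]
    {F : X → ℝ → E} {s : Set X} (hab : a ≤ b)
    (hF : ContinuousOn (fun p : X × ℝ => F p.1 p.2) (s ×ˢ Icc a b)) :
    ContinuousOn (fun t => ∫ x in a..b, F t x) s := by
  rw [continuousOn_iff_continuous_domRestrict]
  have hproj : Continuous fun p : s × ℝ => F p.1 (projIcc a b hab p.2) :=
    hF.comp_continuous (f := fun p : s × ℝ => ((p.1 : X), (projIcc a b hab p.2 : ℝ)))
      (by fun_prop) fun p => ⟨p.1.2, (projIcc a b hab p.2).2⟩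
  refine (intervalIntegral.continuous_parametric_intervalIntegral_of_continuous'
    (μ := volume) (f := fun (t : s) x => F t (projIcc a b hab x)) hproj a b).congr fun t => ?_
  refine intervalIntegral.integral_congr fun x hx => ?_
  rw [uIcc_of_le hab] at hx
  simp only [projIcc_of_mem hab hx]

theorem hasDerivAt_intervalIntegral_of_continuousOn_prod {F F' : ℝ → ℝ → E} {s : Set ℝ}
    {t : ℝ} (hab : a ≤ b) (hs : s ∈ 𝓝 t) (hF : ∀ r ∈ s, ContinuousOn (F r) (Icc a b))
    (hF' : ContinuousOn (fun p : ℝ × ℝ => F' p.1 p.2) (s ×ˢ Icc a b))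
    (hderiv : ∀ r ∈ s, ∀ x ∈ Icc a b, HasDerivAt (fun r => F r x) (F' r x) r) :
    HasDerivAt (fun r => ∫ x in a..b, F r x) (∫ x in a..b, F' t x) t := by
  obtain ⟨ε, hε, hεs⟩ := Metric.nhds_basis_closedBall.mem_iff.1 hs
  obtain ⟨C, hC⟩ := ((isCompact_closedBall t ε).prod isCompact_Icc).exists_bound_of_continuousOn
    (hF'.mono (prod_mono hεs subset_rfl))
  have hint : ∀ {f : ℝ → E}, ContinuousOn f (Icc a b) → IntervalIntegrable f volume a b :=
    fun hf => hf.intervalIntegrable_of_Icc hab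
  have hF't : ContinuousOn (F' t) (Icc a b) :=
    hF'.comp (f := fun x => (t, x)) (by fun_prop) fun x hx => ⟨mem_of_mem_nhds hs, hx⟩
  have hmem : ∀ x ∈ uIoc a b, x ∈ Icc a b := fun x hx =>
    Ioc_subset_Icc_self (uIoc_of_le hab ▸ hx)
  refine (intervalIntegral.hasDerivAt_integral_of_dominated_loc_of_deriv_le (F' := F')
    (bound := fun _ => C) (Metric.closedBall_mem_nhds t hε) ?_ (hint (hF t (mem_of_mem_nhds hs)))
    (hint hF't).def'.aestronglyMeasurable ?_ intervalIntegrable_const ?_).2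
  · filter_upwards [hs] with r hr using (hint (hF r hr)).def'.aestronglyMeasurable
  · exact .of_forall fun x hx r hr => hC (r, x) ⟨hr, hmem x hx⟩
  · exact .of_forall fun x hx r hr => hderiv r (hεs hr) x (hmem x hx)

end IntervalIntegral

/-! ### Uniqueness -/

section Energy

variable {a b : ℝ}

theorem integral_mul_deriv_of_periodic (hab : a ≤ b) {u v u' v' : ℝ → ℝ}
    (hu : ∀ x ∈ Icc a b, HasDerivWithinAt u (u' x) (Icc a b) x)
    (hv : ∀ x ∈ Icc a b, HasDerivWithinAt v (v' x) (Icc a b) x)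
    (hu' : ContinuousOn u' (Icc a b)) (hv' : ContinuousOn v' (Icc a b))
    (hu_per : u a = u b) (hv_per : v a = v b) :
    ∫ x in a..b, u x * v' x = -∫ x in a..b, u' x * v x := by
  rw [← uIcc_of_le hab] at hu hv hu' hv'
  rw [intervalIntegral.integral_mul_deriv_eq_deriv_mul_of_hasDerivWithinAt hu hv
    hu'.intervalIntegrable hv'.intervalIntegrable, hu_per, hv_per, sub_self, zero_sub]

theorem integral_mul_linearized_le (hab : a ≤ b) {w : ℕ → ℝ → ℝ} {β : ℝ → ℝ} {B : ℝ}
    (hderiv : ∀ j < 4, ∀ x ∈ Icc a b, HasDerivWithinAt (w j) (w (j + 1) x) (Icc a b) x)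
    (hcont : ∀ j ≤ 4, ContinuousOn (w j) (Icc a b)) (hper : ∀ j ≤ 3, w j a = w j b)
    (hβ : ContinuousOn β (Icc a b)) (hβB : ∀ x ∈ Icc a b, |β x| ≤ B) :
    ∫ x in a..b, 2 * w 0 x * (-3 * w 4 x - w 2 x - 1 / 2 * (β x * w 1 x)) ≤
      (B ^ 2 / 2 + 1) * ∫ x in a..b, w 0 x ^ 2 := by
  have hint : ∀ {f : ℝ → ℝ}, ContinuousOn f (Icc a b) → IntervalIntegrable f volume a b :=
    fun hf => hf.intervalIntegrable_of_Icc hab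
  have hparts : ∀ i < 4, ∀ j < 4, ∫ x in a..b, w i x * w (j + 1) x =
      -∫ x in a..b, w (i + 1) x * w j x := fun i hi j hj =>
    integral_mul_deriv_of_periodic hab (hderiv i hi) (hderiv j hj) (hcont _ hi) (hcont _ hj)
      (hper i (by lia)) (hper j (by lia))
  have hcont0 := hcont 0 (by lia)
  have hcont1 := hcont 1 (by lia)
  have hcont2 := hcont 2 (by lia)
  have hcont4 := hcont 4 (by lia)
  have h04 : ∫ x in a..b, (w 0 x * w 4 x - w 2 x * w 2 x) = 0 := by
    rw [intervalIntegral.integral_sub (hint (by fun_prop)) (hint (by fun_prop)),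
      hparts 0 (by lia) 3 (by lia), hparts 1 (by lia) 2 (by lia), neg_neg, sub_self]
  have h02 : ∫ x in a..b, (w 1 x * w 1 x + w 0 x * w 2 x) = 0 := by
    rw [intervalIntegral.integral_add (hint (by fun_prop)) (hint (by fun_prop)),
      hparts 0 (by lia) 1 (by lia), add_neg_cancel]
  calc ∫ x in a..b, 2 * w 0 x * (-3 * w 4 x - w 2 x - 1 / 2 * (β x * w 1 x))
    _ ≤ ∫ x in a..b, ((B ^ 2 / 2 + 1) * w 0 x ^ 2 - 6 * (w 0 x * w 4 x - w 2 x * w 2 x) +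
          1 / 2 * (w 1 x * w 1 x + w 0 x * w 2 x)) := by
      refine intervalIntegral.integral_mono_on hab (hint (by fun_prop)) (hint (by fun_prop))
        fun x hx => ?_
      have hβx : β x ^ 2 ≤ B ^ 2 := sq_le_sq' (abs_le.1 (hβB x hx)).1 (abs_le.1 (hβB x hx)).2
      nlinarith [sq_nonneg (β x * w 0 x + w 1 x), sq_nonneg (w 0 x + 5 / 4 * w 2 x),
        mul_le_mul_of_nonneg_right hβx (sq_nonneg (w 0 x)), sq_nonneg (w 2 x)]
    _ = (B ^ 2 / 2 + 1) * ∫ x in a..b, w 0 x ^ 2 := by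
      rw [intervalIntegral.integral_add (hint (by fun_prop)) (hint (by fun_prop)),
        intervalIntegral.integral_sub (hint (by fun_prop)) (hint (by fun_prop))]
      simp only [intervalIntegral.integral_const_mul, h04, h02, mul_zero, sub_zero, add_zero]

theorem eq_zero_of_integral_sq_nonpos {f : ℝ → ℝ} (hab : a < b) (hf : ContinuousOn f (Icc a b))
    (hint : ∫ x in a..b, f x ^ 2 ≤ 0) : ∀ x ∈ Icc a b, f x = 0 := by
  intro x hx
  by_contra hne
  exact hint.not_gt (intervalIntegral.integral_pos hab (hf.pow 2)
    (fun y _ => sq_nonneg (f y)) ⟨x, hx, by positivity⟩)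

theorem eq_zero_of_linearized (hab : a < b) {w : ℕ → ℝ → ℝ → ℝ} {wt β : ℝ → ℝ → ℝ}
    (htime : ∀ t ∈ Ici (0 : ℝ), ∀ x ∈ Icc a b,
      HasDerivWithinAt (fun s => w 0 s x) (wt t x) (Ici 0) t)
    (hspace : ∀ j < 4, ∀ t ∈ Ici (0 : ℝ), ∀ x ∈ Icc a b,
      HasDerivWithinAt (w j t) (w (j + 1) t x) (Icc a b) x)
    (hwt : ContinuousOn (fun p : ℝ × ℝ => wt p.1 p.2) (Ici 0 ×ˢ Icc a b))
    (hw : ∀ j ≤ 4, ContinuousOn (fun p : ℝ × ℝ => w j p.1 p.2) (Ici 0 ×ˢ Icc a b))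
    (hβ : ContinuousOn (fun p : ℝ × ℝ => β p.1 p.2) (Ici 0 ×ˢ Icc a b))
    (heq : ∀ t ∈ Ici (0 : ℝ), ∀ x ∈ Icc a b,
      wt t x = -3 * w 4 t x - w 2 t x - 1 / 2 * (β t x * w 1 t x))
    (hper : ∀ t ∈ Ici (0 : ℝ), ∀ j ≤ 3, w j t a = w j t b)
    (hinit : ∀ x ∈ Icc a b, w 0 0 x = 0) {T : ℝ} (hT : T ∈ Ici 0) :
    ∀ x ∈ Icc a b, w 0 T x = 0 := by
  have hslice : ∀ {f : ℝ → ℝ → ℝ}, ContinuousOn (fun p : ℝ × ℝ => f p.1 p.2) (Ici 0 ×ˢ Icc a b) →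
      ∀ t ∈ Ici (0 : ℝ), ContinuousOn (f t) (Icc a b) :=
    fun hf t ht => hf.comp (f := fun x => (t, x)) (by fun_prop) fun x hx => ⟨ht, hx⟩
  have hw0 := hw 0 (by lia)
  obtain ⟨B, hB⟩ := (isCompact_Icc.prod isCompact_Icc :
    IsCompact (Icc 0 T ×ˢ Icc a b)).exists_bound_of_continuousOn
      (hβ.mono (prod_mono Icc_subset_Ici_self subset_rfl))
  have henergy_deriv : ∀ t ∈ Ioo 0 T, HasDerivAt (fun t => ∫ x in a..b, w 0 t x ^ 2)
      (∫ x in a..b, 2 * w 0 t x * wt t x) t := fun t ht => by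
    refine hasDerivAt_intervalIntegral_of_continuousOn_prod (s := Ioi 0)
      (F' := fun t x => 2 * w 0 t x * wt t x) hab.le
      (Ioi_mem_nhds ht.1) (fun r hr => (hslice hw0 r (Ioi_subset_Ici_self hr)).pow 2)
      (((continuousOn_const.mul hw0).mul hwt).mono (prod_mono Ioi_subset_Ici_self subset_rfl))
      fun r hr x hx => ?_
    have hwr := (htime r (Ioi_subset_Ici_self hr) x hx).hasDerivAt (Ici_mem_nhds hr)
    exact (hwr.pow 2).congr_deriv (by norm_num)
  have henergy_le : ∀ t ∈ Ioo 0 T, ∫ x in a..b, 2 * w 0 t x * wt t x ≤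
      (B ^ 2 / 2 + 1) * ∫ x in a..b, w 0 t x ^ 2 := fun t ht => by
    have ht0 : t ∈ Ici (0 : ℝ) := ht.1.le
    rw [intervalIntegral.integral_congr (g := fun x => 2 * w 0 t x *
      (-3 * w 4 t x - w 2 t x - 1 / 2 * (β t x * w 1 t x))) fun x hx => by
        rw [uIcc_of_le hab.le] at hx
        simp only [heq t ht0 x hx]]
    exact integral_mul_linearized_le (w := fun j => w j t) hab.le (fun j hj => hspace j hj t ht0)
      (fun j hj => hslice (hw j hj) t ht0) (hper t ht0) (hslice hβ t ht0)
      fun x hx => hB (t, x) ⟨⟨ht.1.le, ht.2.le⟩, hx⟩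
  have hgronwall := le_exp_mul_of_hasDerivAt_le hT
    (continuousOn_intervalIntegral_of_continuousOn_prod hab.le
      ((hw0.pow 2).mono (prod_mono Icc_subset_Ici_self subset_rfl))) henergy_deriv henergy_le
  refine eq_zero_of_integral_sq_nonpos hab (hslice hw0 T hT) (hgronwall.trans_eq ?_)
  rw [intervalIntegral.integral_congr (g := fun _ => 0) fun x hx => by
    rw [uIcc_of_le hab.le] at hx
    simp only [hinit x hx, ne_eq, OfNat.ofNat_ne_zero, not_false_eq_true, zero_pow]]
  simp only [intervalIntegral.integral_zero, mul_zero]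

end Energy

theorem isKSSolution_unique {ℓ₀ : ℝ} (hℓ₀ : 0 < ℓ₀) {Φ₀ : ℝ → ℝ} {Φ Ψ : ℝ → ℝ → ℝ}
    (hΦ : IsKSSolution ℓ₀ Φ₀ Φ) (hΨ : IsKSSolution ℓ₀ Φ₀ Ψ) :
    ∀ τ ∈ Ici (0 : ℝ), ∀ η ∈ Iℓ ℓ₀, Ψ τ η = Φ τ η := by
  obtain ⟨Φτ, D, rfl, hΦτ, hD, hΦτ_cont, hD_cont, hΦ_eq, hD_per, hΦ_init⟩ := hΦ
  obtain ⟨Ψτ, F, rfl, hΨτ, hF, hΨτ_cont, hF_cont, hΨ_eq, hF_per, hΨ_init⟩ := hΨ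
  intro τ hτ η hη
  refine sub_eq_zero.1 (eq_zero_of_linearized (w := fun j t x => F j t x - D j t x)
    (wt := fun t x => Ψτ t x - Φτ t x) (β := fun t x => F 1 t x + D 1 t x)
    (by linarith : -(ℓ₀ / 2) < ℓ₀ / 2) (fun t ht x hx => (hΨτ t ht x hx).sub (hΦτ t ht x hx))
    (fun j hj t ht x hx => (hF j hj t ht x hx).sub (hD j hj t ht x hx))
    (hΨτ_cont.sub hΦτ_cont) (fun j hj => (hF_cont j hj).sub (hD_cont j hj))
    ((hF_cont 1 (by lia)).add (hD_cont 1 (by lia))) (fun t ht x hx => ?_)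
    (fun t ht j hj => by rw [hF_per t ht j hj, hD_per t ht j hj])
    (fun x hx => by rw [hΨ_init x hx, hΦ_init x hx, sub_self]) hτ η hη)
  rw [hΨ_eq t ht x hx, hΦ_eq t ht x hx]
  ring

/-! ### Decay of Fourier coefficients -/

/-- The weight `1 + |k|`, in powers of which the decay of Fourier coefficients is measured. -/
noncomputable def modeWeight (k : ℤ) : ℝ := 1 + |(k : ℝ)|

theorem one_le_modeWeight (k : ℤ) : 1 ≤ modeWeight k := le_add_of_nonneg_right (abs_nonneg _)

theorem modeWeight_pos (k : ℤ) : 0 < modeWeight k := one_pos.trans_le (one_le_modeWeight k)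

theorem abs_intCast_le_modeWeight (k : ℤ) : |(k : ℝ)| ≤ modeWeight k :=
  le_add_of_nonneg_left zero_le_one

theorem modeWeight_add_le (j k : ℤ) : modeWeight (j + k) ≤ modeWeight j + modeWeight k := by
  have := abs_add_le (j : ℝ) k
  simp only [modeWeight, Int.cast_add]
  linarith

theorem summable_one_div_modeWeight_pow {n : ℕ} (hn : 2 ≤ n) :
    Summable fun k => 1 / modeWeight k ^ n := by
  have hnat : Summable fun k : ℕ => 1 / (1 + (k : ℝ)) ^ n := by
    simpa only [Nat.cast_add, Nat.cast_one, add_comm] using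
      (summable_nat_add_iff 1).2 (Real.summable_one_div_nat_pow.2 hn)
  exact .of_nat_of_neg (by simpa [modeWeight] using hnat) (by simpa [modeWeight] using hnat)

/-- `c` is `O((1 + |k|)⁻ⁿ)` with constant `B`. The constant is explicit so that bounds can be
asserted uniformly in time and in the truncation parameter. -/
def HasDecay (n : ℕ) (B : ℝ) (c : ℤ → ℂ) : Prop := ∀ k, ‖c k‖ ≤ B / modeWeight k ^ n

namespace HasDecay

variable {m n : ℕ} {B B' : ℝ} {c c' : ℤ → ℂ}

theorem const_nonneg (hc : HasDecay n B c) : 0 ≤ B := by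
  simpa [modeWeight] using (norm_nonneg _).trans (hc 0)

theorem of_le (hc : HasDecay n B c) (hmn : m ≤ n) : HasDecay m B c := fun k =>
  (hc k).trans <| div_le_div_of_nonneg_left hc.const_nonneg (pow_pos (modeWeight_pos k) m)
    (pow_le_pow_right₀ (one_le_modeWeight k) hmn)

theorem mono (hc : HasDecay n B c) (hB : B ≤ B') : HasDecay n B' c := fun k =>
  (hc k).trans (div_le_div_of_nonneg_right hB (pow_pos (modeWeight_pos k) n).le)

theorem norm_le (hc : HasDecay n B c) (k : ℤ) : ‖c k‖ ≤ B := by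
  simpa using hc.of_le n.zero_le k

theorem add (hc : HasDecay n B c) (hc' : HasDecay n B' c') :
    HasDecay n (B + B') (fun k => c k + c' k) := fun k =>
  (norm_add_le _ _).trans <| (add_le_add (hc k) (hc' k)).trans_eq (add_div _ _ _).symm

theorem mul_of_norm_le {q : ℤ → ℂ} {Q : ℝ} (hc : HasDecay (n + m) B c)
    (hq : ∀ k, ‖q k‖ ≤ Q * modeWeight k ^ m) : HasDecay n (Q * B) (fun k => q k * c k) :=
  fun k => by
  have hwt := modeWeight_pos k
  calc ‖q k * c k‖ = ‖q k‖ * ‖c k‖ := norm_mul _ _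
    _ ≤ Q * modeWeight k ^ m * (B / modeWeight k ^ (n + m)) :=
      mul_le_mul (hq k) (hc k) (norm_nonneg _) ((norm_nonneg _).trans (hq k))
    _ = Q * B / modeWeight k ^ n := by rw [pow_add]; field_simp

theorem const_mul (hc : HasDecay n B c) (q : ℂ) : HasDecay n (‖q‖ * B) (fun k => q * c k) :=
  mul_of_norm_le (m := 0) hc fun _ => by rw [pow_zero, mul_one]

theorem summable_norm (hc : HasDecay n B c) (hn : 2 ≤ n) : Summable fun k => ‖c k‖ :=
  .of_nonneg_of_le (fun _ => norm_nonneg _) (fun k => (hc k).trans_eq (mul_one_div _ _).symm)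
    ((summable_one_div_modeWeight_pow hn).mul_left B)

end HasDecay

/-- The conjugation symmetry of the Fourier coefficients of a real-valued function. -/
def IsHermitianSeq (c : ℤ → ℂ) : Prop := ∀ k, c (-k) = conj (c k)

theorem IsHermitianSeq.neg_half_mul {c : ℤ → ℂ} (hc : IsHermitianSeq c) :
    IsHermitianSeq (fun k => -(1 / 2) * c k) := fun k => by
  simp only [hc k, map_mul, map_neg, map_div₀, map_one, Complex.conj_ofNat]

/-! ### Fourier symbols -/

/-- The Fourier symbol `iωk` of `∂_η`, for functions of period `2π / ω`. -/
noncomputable def derivSymbol (ω : ℝ) (k : ℤ) : ℂ := Complex.I * (ω * k)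

/-- The Fourier symbol of the dissipative operator `3∂_η⁴ + ∂_η²`. -/
noncomputable def linearSymbol (ω : ℝ) (k : ℤ) : ℝ := 3 * (ω * k) ^ 4 - (ω * k) ^ 2

section Symbol

variable (ω : ℝ) (k : ℤ)

theorem norm_derivSymbol_le : ‖derivSymbol ω k‖ ≤ |ω| * modeWeight k := by
  rw [derivSymbol, norm_mul, Complex.norm_I, one_mul, norm_mul, Complex.norm_real,
    Complex.norm_intCast, Real.norm_eq_abs]
  exact mul_le_mul_of_nonneg_left (abs_intCast_le_modeWeight k) (abs_nonneg ω)

theorem derivSymbol_neg : derivSymbol ω (-k) = conj (derivSymbol ω k) := by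
  simp [derivSymbol]

theorem linearSymbol_neg : linearSymbol ω (-k) = linearSymbol ω k := by
  rw [linearSymbol, linearSymbol, Int.cast_neg]
  ring

theorem ofReal_linearSymbol :
    (linearSymbol ω k : ℂ) = 3 * derivSymbol ω k ^ 4 + derivSymbol ω k ^ 2 := by
  simp only [linearSymbol, derivSymbol, mul_pow, Complex.I_sq, Complex.I_pow_four]
  push_cast
  ring

theorem linearSymbol_add_one_ge : (ω * k) ^ 4 + 1 / 2 ≤ linearSymbol ω k + 1 := by
  rw [linearSymbol]
  nlinarith [sq_nonneg ((ω * k) ^ 2 - 1 / 4)]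

theorem linearSymbol_add_one_pos : 0 < linearSymbol ω k + 1 :=
  lt_of_lt_of_le (by positivity) (linearSymbol_add_one_ge ω k)

theorem norm_linearSymbol_le :
    ‖(linearSymbol ω k : ℂ)‖ ≤ (3 * ω ^ 4 + ω ^ 2) * modeWeight k ^ 4 := by
  have hk : (k : ℝ) ^ 2 ≤ modeWeight k ^ 2 := sq_le_sq' (by
    linarith [neg_abs_le (k : ℝ), abs_intCast_le_modeWeight k])
    ((le_abs_self _).trans (abs_intCast_le_modeWeight k))
  have hk4 : (k : ℝ) ^ 4 ≤ modeWeight k ^ 4 := by nlinarith [sq_nonneg (k : ℝ)]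
  have hwt : modeWeight k ^ 2 ≤ modeWeight k ^ 4 :=
    pow_le_pow_right₀ (one_le_modeWeight k) (by norm_num)
  rw [Complex.norm_real, linearSymbol]
  calc ‖3 * (ω * k) ^ 4 - (ω * k) ^ 2‖ ≤ 3 * ω ^ 4 * (k : ℝ) ^ 4 + ω ^ 2 * (k : ℝ) ^ 2 := by
        rw [Real.norm_eq_abs, abs_le, mul_pow, mul_pow]
        constructor <;> nlinarith [mul_nonneg (sq_nonneg (ω ^ 2)) (sq_nonneg ((k : ℝ) ^ 2)),
          mul_nonneg (sq_nonneg ω) (sq_nonneg (k : ℝ))]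
    _ ≤ 3 * ω ^ 4 * modeWeight k ^ 4 + ω ^ 2 * modeWeight k ^ 4 := by
        gcongr
        exact hk.trans hwt
    _ = (3 * ω ^ 4 + ω ^ 2) * modeWeight k ^ 4 := by ring

theorem modeWeight_pow_four_le {ω : ℝ} (hω : ω ≠ 0) (k : ℤ) :
    modeWeight k ^ 4 ≤ (16 + 8 / ω ^ 4) * (linearSymbol ω k + 1) := by
  calc modeWeight k ^ 4 ≤ 2 ^ 3 * (1 ^ 4 + |(k : ℝ)| ^ 4) :=
        add_pow_le zero_le_one (abs_nonneg _) 4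
    _ = 16 * (1 / 2) + 8 / ω ^ 4 * (ω * k) ^ 4 := by
        rw [pow_abs, abs_of_nonneg (by positivity : (0 : ℝ) ≤ (k : ℝ) ^ 4)]
        field_simp
        ring
    _ ≤ 16 * ((ω * k) ^ 4 + 1 / 2) + 8 / ω ^ 4 * ((ω * k) ^ 4 + 1 / 2) := by
        have : 0 ≤ (ω * k) ^ 4 := by positivity
        gcongr <;> linarith
    _ = (16 + 8 / ω ^ 4) * ((ω * k) ^ 4 + 1 / 2) := by ring
    _ ≤ (16 + 8 / ω ^ 4) * (linearSymbol ω k + 1) := by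
        exact mul_le_mul_of_nonneg_left (linearSymbol_add_one_ge ω k) (by positivity)

end Symbol

theorem HasDecay.derivSymbol_mul {n : ℕ} {B : ℝ} {c : ℤ → ℂ} (hc : HasDecay (n + 1) B c)
    (ω : ℝ) : HasDecay n (|ω| * B) (fun k => derivSymbol ω k * c k) :=
  hc.mul_of_norm_le fun k => by simpa using norm_derivSymbol_le ω k

theorem IsHermitianSeq.derivSymbol_mul {c : ℤ → ℂ} (hc : IsHermitianSeq c) (ω : ℝ) :
    IsHermitianSeq (fun k => derivSymbol ω k * c k) := fun k => by
  simp only [derivSymbol_neg, hc k, map_mul]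

/-! ### Self-convolution -/

/-- The convolution square of `c`: the Fourier coefficients of the square of the function whose
coefficients are `c`. -/
noncomputable def selfConv (c : ℤ → ℂ) (k : ℤ) : ℂ := ∑' j, c j * c (k - j)

theorem norm_selfConv_le {c : ℤ → ℂ} (hc : Summable fun k => ‖c k‖ ^ 2) (k : ℤ) :
    ‖selfConv c k‖ ≤ ∑' j, ‖c j‖ ^ 2 := by
  have hreflect : HasSum (fun j => ‖c (k - j)‖ ^ 2) (∑' j, ‖c j‖ ^ 2) :=
    ((Equiv.subLeft k).hasSum_iff (f := fun j => ‖c j‖ ^ 2)).2 hc.hasSum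
  refine tsum_of_norm_bounded (by
    simpa only [← add_mul, add_self_div_two] using (hc.hasSum.add hreflect).div_const 2)
    fun j => ?_
  rw [norm_mul]
  linarith [two_mul_le_add_sq ‖c j‖ ‖c (k - j)‖]

theorem inv_mul_inv_modeWeight_pow_le (n : ℕ) (j k : ℤ) :
    (modeWeight j ^ n)⁻¹ * (modeWeight k ^ n)⁻¹ ≤
      2 ^ n * (modeWeight (j + k) ^ n)⁻¹ * ((modeWeight j ^ n)⁻¹ + (modeWeight k ^ n)⁻¹) := by
  have hj := pow_pos (modeWeight_pos j) n
  have hk := pow_pos (modeWeight_pos k) n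
  have hjk := pow_pos (modeWeight_pos (j + k)) n
  have hweight : modeWeight (j + k) ^ n ≤ 2 ^ n * (modeWeight j ^ n + modeWeight k ^ n) :=
    calc modeWeight (j + k) ^ n ≤ (modeWeight j + modeWeight k) ^ n :=
          pow_le_pow_left₀ (modeWeight_pos _).le (modeWeight_add_le j k) n
      _ ≤ 2 ^ (n - 1) * (modeWeight j ^ n + modeWeight k ^ n) :=
          add_pow_le (modeWeight_pos j).le (modeWeight_pos k).le n
      _ ≤ 2 ^ n * (modeWeight j ^ n + modeWeight k ^ n) := by
          gcongr
          · norm_num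
          · exact n.sub_le 1
  rw [← mul_inv, inv_add_inv hj.ne' hk.ne', mul_right_comm, ← div_eq_mul_inv, le_div_iff₀ hjk,
    inv_mul_eq_div, ← mul_div_assoc]
  gcongr

theorem hasDecay_selfConv {n : ℕ} {B : ℝ} {c : ℤ → ℂ} (hc : HasDecay n B c) (hn : 2 ≤ n) :
    HasDecay n (2 ^ (n + 1) * B ^ 2 * ∑' j, 1 / modeWeight j ^ n) (selfConv c) := by
  intro k
  have hsum := (summable_one_div_modeWeight_pow hn).hasSum
  have hreflect : HasSum (fun j => 1 / modeWeight (k - j) ^ n) (∑' j, 1 / modeWeight j ^ n) :=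
    ((Equiv.subLeft k).hasSum_iff (f := fun j => 1 / modeWeight j ^ n)).2 hsum
  have hbound : ∀ j, ‖c j * c (k - j)‖ ≤ B ^ 2 * (2 ^ n * (modeWeight k ^ n)⁻¹) *
      (1 / modeWeight j ^ n + 1 / modeWeight (k - j) ^ n) := fun j => by
    calc ‖c j * c (k - j)‖ = ‖c j‖ * ‖c (k - j)‖ := norm_mul _ _
      _ ≤ B / modeWeight j ^ n * (B / modeWeight (k - j) ^ n) :=
        mul_le_mul (hc j) (hc (k - j)) (norm_nonneg _) ((norm_nonneg _).trans (hc j))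
      _ = B ^ 2 * ((modeWeight j ^ n)⁻¹ * (modeWeight (k - j) ^ n)⁻¹) := by
        rw [div_eq_mul_inv, div_eq_mul_inv]
        ring
      _ ≤ B ^ 2 * (2 ^ n * (modeWeight k ^ n)⁻¹ *
          ((modeWeight j ^ n)⁻¹ + (modeWeight (k - j) ^ n)⁻¹)) := by
        refine mul_le_mul_of_nonneg_left ?_ (sq_nonneg B)
        simpa only [add_sub_cancel] using inv_mul_inv_modeWeight_pow_le n j (k - j)
      _ = _ := by rw [one_div, one_div, mul_assoc (B ^ 2)]
  refine (tsum_of_norm_bounded ((hsum.add hreflect).mul_left _) hbound).trans_eq ?_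
  rw [pow_succ, div_eq_mul_inv]
  ring

theorem tendsto_selfConv {ι : Type*} {l : Filter ι} {n : ℕ} {B : ℝ} {c : ι → ℤ → ℂ} {d : ℤ → ℂ}
    (hn : 2 ≤ n) (hdecay : ∀ᶠ i in l, HasDecay n B (c i))
    (hlim : ∀ k, Tendsto (fun i => c i k) l (𝓝 (d k))) (k : ℤ) :
    Tendsto (fun i => selfConv (c i) k) l (𝓝 (selfConv d k)) := by
  refine tendsto_tsum_of_dominated_convergence
    (bound := fun j => B * (1 / modeWeight j ^ n) * B)
    (((summable_one_div_modeWeight_pow hn).mul_left B).mul_right B)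
    (fun j => (hlim j).mul (hlim (k - j))) ?_
  filter_upwards [hdecay] with i hi j
  rw [norm_mul, mul_one_div]
  exact mul_le_mul (hi j) (hi.norm_le _) (norm_nonneg _) ((norm_nonneg _).trans (hi j))

theorem isHermitianSeq_selfConv {c : ℤ → ℂ} (hc : IsHermitianSeq c) :
    IsHermitianSeq (selfConv c) := fun k => by
  rw [selfConv, selfConv, Complex.conj_tsum, ← (Equiv.neg ℤ).tsum_eq]
  refine tsum_congr fun j => ?_
  rw [Equiv.neg_apply, map_mul, hc, ← hc (k - j)]
  congr 2
  ring

/-! ### Duhamel's formula -/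

/-- Duhamel's formula for the solution of `y' = -l y + g`, `y 0 = y₀`. -/
noncomputable def duhamel (l : ℝ) (y₀ : ℂ) (g : ℝ → ℂ) (t : ℝ) : ℂ :=
  (Real.exp (-(l * t)) : ℂ) * y₀ + ∫ s in (0)..t, (Real.exp (-(l * (t - s))) : ℂ) * g s

section Duhamel

variable {l : ℝ} {y₀ : ℂ} {g : ℝ → ℂ} {t : ℝ}

theorem duhamel_zero_right (l : ℝ) (y₀ : ℂ) (g : ℝ → ℂ) : duhamel l y₀ g 0 = y₀ := by
  simp [duhamel]

theorem mul_duhamel (l : ℝ) (y₀ : ℂ) (g : ℝ → ℂ) (t : ℝ) (q : ℂ) :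
    q * duhamel l y₀ g t = duhamel l (q * y₀) (fun s => q * g s) t := by
  simp only [duhamel, mul_add, mul_left_comm _ q, intervalIntegral.integral_const_mul]

theorem conj_duhamel (l : ℝ) (y₀ : ℂ) (g : ℝ → ℂ) (t : ℝ) :
    conj (duhamel l y₀ g t) = duhamel l (conj y₀) (fun s => conj (g s)) t := by
  simp only [duhamel, map_add, map_mul, Complex.conj_ofReal,
    ← intervalIntegral.intervalIntegral_conj]

theorem duhamel_congr {g' : ℝ → ℂ} (ht : 0 ≤ t) (hg : EqOn g g' (Icc 0 t)) :
    duhamel l y₀ g t = duhamel l y₀ g' t := by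
  rw [duhamel, duhamel, intervalIntegral.integral_congr fun s hs => ?_]
  simp only [hg (uIcc_of_le ht ▸ hs)]

theorem hasDerivAt_exp_neg_mul_sub (l t s : ℝ) :
    HasDerivAt (fun s => Real.exp (-(l * (t - s)))) (l * Real.exp (-(l * (t - s)))) s := by
  have hinner : HasDerivAt (fun s => -(l * (t - s))) l s := by
    simpa using ((hasDerivAt_id' s).const_sub t).const_mul (-l)
  exact hinner.exp.congr_deriv (mul_comm _ _)

theorem integral_exp_neg_mul_sub_le (hl : 0 < l) (t : ℝ) :
    ∫ s in (0)..t, Real.exp (-(l * (t - s))) ≤ 1 / l := by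
  have hprim : ∀ s ∈ uIcc 0 t, HasDerivAt (fun s => Real.exp (-(l * (t - s))) / l)
      (Real.exp (-(l * (t - s)))) s := fun s _ =>
    ((hasDerivAt_exp_neg_mul_sub l t s).div_const l).congr_deriv
      (mul_div_cancel_left₀ _ hl.ne')
  rw [intervalIntegral.integral_eq_sub_of_hasDerivAt hprim
    (Continuous.intervalIntegrable (by fun_prop) _ _)]
  simp only [sub_self, mul_zero, neg_zero, Real.exp_zero, sub_le_self_iff]
  positivity

theorem norm_duhamel_le (hl : 0 < l + 1) (ht : 0 ≤ t) {G : ℝ} (hg : ∀ s ∈ Icc 0 t, ‖g s‖ ≤ G) :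
    ‖duhamel l y₀ g t‖ ≤ Real.exp t * (‖y₀‖ + G / (l + 1)) := by
  have hG : 0 ≤ G := (norm_nonneg _).trans (hg 0 (left_mem_Icc.2 ht))
  have hhom : ‖(Real.exp (-(l * t)) : ℂ) * y₀‖ ≤ Real.exp t * ‖y₀‖ := by
    rw [norm_mul, Complex.norm_real, Real.norm_of_nonneg (Real.exp_pos _).le]
    gcongr
    nlinarith
  have hinhom : ‖∫ s in (0)..t, (Real.exp (-(l * (t - s))) : ℂ) * g s‖ ≤
      ∫ s in (0)..t, Real.exp t * Real.exp (-((l + 1) * (t - s))) * G := by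
    refine intervalIntegral.norm_integral_le_of_norm_le ht (.of_forall fun s hs => ?_)
      (Continuous.intervalIntegrable (by fun_prop) _ _)
    rw [norm_mul, Complex.norm_real, Real.norm_of_nonneg (Real.exp_pos _).le, ← Real.exp_add]
    gcongr
    · linarith [hs.1]
    · exact hg s ⟨hs.1.le, hs.2⟩
  rw [intervalIntegral.integral_mul_const, intervalIntegral.integral_const_mul] at hinhom
  calc ‖duhamel l y₀ g t‖ ≤ Real.exp t * ‖y₀‖ + Real.exp t * (1 / (l + 1)) * G := by
        refine (norm_add_le _ _).trans (add_le_add hhom (hinhom.trans ?_))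
        gcongr
        exact integral_exp_neg_mul_sub_le hl t
    _ = Real.exp t * (‖y₀‖ + G / (l + 1)) := by ring

theorem eq_duhamel_of_hasDerivWithinAt {y : ℝ → ℂ} {T : ℝ} (hg : ContinuousOn g (Icc 0 T))
    (hy : ∀ t ∈ Icc 0 T, HasDerivWithinAt y (-l * y t + g t) (Icc 0 T) t) (ht : t ∈ Icc 0 T) :
    y t = duhamel l (y 0) g t := by
  have hsub : Icc 0 t ⊆ Icc 0 T := Icc_subset_Icc_right ht.2
  have hexp : ContinuousOn (fun s => (Real.exp (-(l * (t - s))) : ℂ)) (Icc 0 t) :=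
    Continuous.continuousOn (by fun_prop)
  have hderiv : ∀ s ∈ Ioo 0 t, HasDerivAt (fun s => (Real.exp (-(l * (t - s))) : ℂ) * y s)
      ((Real.exp (-(l * (t - s))) : ℂ) * g s) s := fun s hs => by
    have hys := (hy s (hsub (Ioo_subset_Icc_self hs))).hasDerivAt
      (Icc_mem_nhds hs.1 (hs.2.trans_le ht.2))
    exact ((hasDerivAt_exp_neg_mul_sub l t s).ofReal_comp.mul hys).congr_deriv
      (by push_cast; ring)
  have hftc := intervalIntegral.integral_eq_sub_of_hasDerivAt_of_le ht.1
    (hexp.mul fun s hs => ((hy s (hsub hs)).continuousWithinAt).mono hsub) hderiv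
    ((hexp.mul (hg.mono hsub)).intervalIntegrable_of_Icc ht.1)
  rw [duhamel, hftc]
  simp

theorem hasDerivWithinAt_duhamel_Icc {T : ℝ} (hg : ContinuousOn g (Icc 0 T)) (ht : t ∈ Icc 0 T) :
    HasDerivWithinAt (duhamel l y₀ g) (-l * duhamel l y₀ g t + g t) (Icc 0 T) t := by
  have hT : 0 ≤ T := ht.1.trans ht.2
  have hprim : HasDerivAt (fun r => ∫ s in (0)..r, (Real.exp (l * s) : ℂ) * g (projIcc 0 T hT s))
      ((Real.exp (l * t) : ℂ) * g (projIcc 0 T hT t)) t := by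
    have hg_proj : Continuous fun s => g (projIcc 0 T hT s) :=
      hg.comp_continuous (by fun_prop) fun s => (projIcc 0 T hT s).2
    have hexp : Continuous fun s : ℝ => (Real.exp (l * s) : ℂ) := by fun_prop
    exact ((hexp.mul hg_proj).integral_hasStrictDerivAt 0 t).hasDerivAt
  have hfactor : ∀ r ∈ Icc 0 T, duhamel l y₀ g r = (Real.exp (-l * r) : ℂ) *
      (y₀ + ∫ s in (0)..r, (Real.exp (l * s) : ℂ) * g (projIcc 0 T hT s)) := fun r hr => by
    rw [duhamel, mul_add, ← intervalIntegral.integral_const_mul, neg_mul]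
    congr 1
    refine intervalIntegral.integral_congr fun s hs => ?_
    rw [uIcc_of_le hr.1] at hs
    simp only [projIcc_of_mem hT ⟨hs.1, hs.2.trans hr.2⟩, ← mul_assoc, ← Complex.ofReal_mul,
      ← Real.exp_add]
    ring_nf
  have hexp : HasDerivAt (fun r => (Real.exp (-l * r) : ℂ))
      ((Real.exp (-l * t) * (-l * 1) : ℝ) : ℂ) t :=
    ((hasDerivAt_id' t).const_mul (-l)).exp.ofReal_comp
  have hcancel : (Real.exp (-l * t) : ℂ) * Real.exp (l * t) = 1 := by
    rw [← Complex.ofReal_mul, ← Real.exp_add, neg_mul, neg_add_cancel, Real.exp_zero,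
      Complex.ofReal_one]
  refine ((hexp.mul (hprim.const_add y₀)).hasDerivWithinAt.congr hfactor
    (hfactor t ht)).congr_deriv ?_
  rw [hfactor t ht, projIcc_of_mem hT ht, ← mul_assoc (Real.exp (-l * t) : ℂ), hcancel]
  push_cast
  ring

theorem hasDerivWithinAt_duhamel (hg : ContinuousOn g (Ici 0)) (ht : t ∈ Ici 0) :
    HasDerivWithinAt (duhamel l y₀ g) (-l * duhamel l y₀ g t + g t) (Ici 0) t := by
  have hIcc := hasDerivWithinAt_duhamel_Icc (l := l) (y₀ := y₀) (T := t + 1)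
    (hg.mono Icc_subset_Ici_self) ⟨ht, (lt_add_one t).le⟩
  exact hIcc.mono_of_mem_nhdsWithin (inter_mem_nhdsWithin _ (Iic_mem_nhds (lt_add_one t)))

theorem tendsto_duhamel {ι : Type*} {L : Filter ι} [L.IsCountablyGenerated] {f : ι → ℝ → ℂ}
    {G : ℝ} (ht : 0 ≤ t) (hf : ∀ᶠ i in L, ContinuousOn (f i) (Icc 0 t))
    (hbound : ∀ᶠ i in L, ∀ s ∈ Icc 0 t, ‖f i s‖ ≤ G)
    (hlim : ∀ s ∈ Icc 0 t, Tendsto (fun i => f i s) L (𝓝 (g s))) :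
    Tendsto (fun i => duhamel l y₀ (f i) t) L (𝓝 (duhamel l y₀ g t)) := by
  have hmem : ∀ s ∈ uIoc 0 t, s ∈ Icc 0 t := fun s hs =>
    Ioc_subset_Icc_self (uIoc_of_le ht ▸ hs)
  refine tendsto_const_nhds.add (intervalIntegral.tendsto_integral_filter_of_dominated_convergence
    (fun s => Real.exp (-(l * (t - s))) * G) ?_ ?_
    (Continuous.intervalIntegrable (by fun_prop) _ _)
    (.of_forall fun s hs => (hlim s (hmem s hs)).const_mul _))
  · filter_upwards [hf] with i hi
    have hcont : ContinuousOn (fun s => (Real.exp (-(l * (t - s))) : ℂ) * f i s) (Icc 0 t) :=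
      ContinuousOn.mul (by fun_prop) hi
    exact (hcont.intervalIntegrable_of_Icc ht).def'.aestronglyMeasurable
  · filter_upwards [hbound] with i hi
    refine .of_forall fun s hs => ?_
    rw [norm_mul, Complex.norm_real, Real.norm_of_nonneg (Real.exp_pos _).le]
    gcongr
    exact hi s (hmem s hs)

end Duhamel

/-- The Fourier coefficients at time `t` of the solution of the linear problem
`Φ_τ = -3Φ_ηηηη - Φ_ηη + g` with initial coefficients `c₀`, for the frequency `ω = 2π / ℓ₀`. -/
noncomputable def linearFlow (ω : ℝ) (c₀ : ℤ → ℂ) (g : ℝ → ℤ → ℂ) (t : ℝ) (k : ℤ) : ℂ :=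
  duhamel (linearSymbol ω k) (c₀ k) (fun s => g s k) t

section LinearFlow

variable {ω : ℝ} {c₀ : ℤ → ℂ} {g : ℝ → ℤ → ℂ} {t : ℝ}

theorem isHermitianSeq_linearFlow (ht : 0 ≤ t) (hc₀ : IsHermitianSeq c₀)
    (hg : ∀ s ∈ Icc 0 t, IsHermitianSeq (g s)) : IsHermitianSeq (linearFlow ω c₀ g t) := by
  intro k
  rw [linearFlow, linearFlow, linearSymbol_neg, hc₀ k, conj_duhamel]
  exact duhamel_congr ht fun s hs => hg s hs k

-- The dissipation `λ_k ~ 3(ωk)⁴` gains four orders of decay over the forcing.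
theorem hasDecay_linearFlow {n : ℕ} {A G τ : ℝ} (hω : ω ≠ 0) (ht : t ∈ Icc 0 τ)
    (hc₀ : HasDecay (n + 4) A c₀) (hg : ∀ s ∈ Icc 0 t, HasDecay n G (g s)) :
    HasDecay (n + 4) (Real.exp τ * (A + (16 + 8 / ω ^ 4) * G)) (linearFlow ω c₀ g t) := by
  intro k
  have hwt := modeWeight_pos k
  have hG : 0 ≤ G := (hg 0 (left_mem_Icc.2 ht.1)).const_nonneg
  have hgain : 1 / (linearSymbol ω k + 1) ≤ (16 + 8 / ω ^ 4) / modeWeight k ^ 4 := by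
    rw [div_le_div_iff₀ (linearSymbol_add_one_pos ω k) (by positivity), one_mul]
    exact modeWeight_pow_four_le hω k
  calc ‖linearFlow ω c₀ g t k‖
    _ ≤ Real.exp t * (‖c₀ k‖ + G / modeWeight k ^ n / (linearSymbol ω k + 1)) :=
      norm_duhamel_le (linearSymbol_add_one_pos ω k) ht.1 fun s hs => hg s hs k
    _ = Real.exp t * (‖c₀ k‖ + G / modeWeight k ^ n * (1 / (linearSymbol ω k + 1))) := by
      rw [mul_one_div]
    _ ≤ Real.exp t * (A / modeWeight k ^ (n + 4) +
          G / modeWeight k ^ n * ((16 + 8 / ω ^ 4) / modeWeight k ^ 4)) := by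
      gcongr
      exact hc₀ k
    _ = Real.exp t * (A + (16 + 8 / ω ^ 4) * G) / modeWeight k ^ (n + 4) := by
      rw [pow_add]
      field_simp
    _ ≤ Real.exp τ * (A + (16 + 8 / ω ^ 4) * G) / modeWeight k ^ (n + 4) := by
      have hA := hc₀.const_nonneg
      gcongr
      exact ht.2

end LinearFlow

/-! ### Ordinary differential equations with an energy estimate -/

section EnergyODE

variable {E : Type*} [NormedAddCommGroup E]

theorem exists_solution_of_lipschitzWith_of_norm_le [NormedSpace ℝ E] [CompleteSpace E]
    {F : E → E} {K : NNReal} {L T : ℝ} (hF : LipschitzWith K F) (hL : ∀ x, ‖F x‖ ≤ L)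
    (hT : 0 ≤ T) (x₀ : E) :
    ∃ x : ℝ → E, x 0 = x₀ ∧ ∀ t ∈ Icc 0 T, HasDerivWithinAt x (F (x t)) (Icc 0 T) t := by
  have hL₀ : 0 ≤ L := (norm_nonneg _).trans (hL 0)
  have hpicard : IsPicardLindelof (fun _ => F) (tmin := 0) (tmax := T) ⟨0, left_mem_Icc.2 hT⟩ x₀
      (⟨L, hL₀⟩ * ⟨T, hT⟩) 0 ⟨L, hL₀⟩ K := by
    refine ⟨fun _ _ => hF.lipschitzOnWith, fun _ _ => continuousOn_const, fun _ _ x _ => hL x, ?_⟩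
    simp only [sub_zero, sub_self, max_eq_left hT, NNReal.coe_zero]
    exact le_rfl
  exact hpicard.exists_eq_forall_mem_Icc_hasDerivWithinAt₀

variable [InnerProductSpace ℝ E] {F : E → E} {C T : ℝ}

theorem norm_sq_le_exp_of_inner_le {x x' : ℝ → E}
    (hx : ∀ t ∈ Icc 0 T, HasDerivWithinAt x (x' t) (Icc 0 T) t)
    (hinner : ∀ t ∈ Icc 0 T, inner ℝ (x t) (x' t) ≤ C * ‖x t‖ ^ 2) {t : ℝ} (ht : t ∈ Icc 0 T) :
    ‖x t‖ ^ 2 ≤ Real.exp (2 * C * t) * ‖x 0‖ ^ 2 := by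
  have hsub : Icc 0 t ⊆ Icc 0 T := Icc_subset_Icc_right ht.2
  have hcont : ContinuousOn x (Icc 0 t) := fun s hs =>
    (hx s (hsub hs)).continuousWithinAt.mono hsub
  simpa using le_exp_mul_of_hasDerivAt_le (f := fun s => ‖x s‖ ^ 2) (C := 2 * C) ht.1
    (hcont.norm.pow 2)
    (fun s hs => ((hx s (hsub (Ioo_subset_Icc_self hs))).hasDerivAt
      (Icc_mem_nhds hs.1 (hs.2.trans_le ht.2))).norm_sq)
    fun s hs => by linarith [hinner s (hsub (Ioo_subset_Icc_self hs))]

-- Cutting `F` off outside a ball preserves the energy estimate, which in turn keeps the solution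
-- of the truncated equation inside the ball.
theorem exists_solution_of_inner_le [FiniteDimensional ℝ E] (hF : ContDiff ℝ 1 F)
    (hC : 0 ≤ C) (hinner : ∀ x, inner ℝ x (F x) ≤ C * ‖x‖ ^ 2) (hT : 0 ≤ T) (x₀ : E) :
    ∃ x : ℝ → E, x 0 = x₀ ∧ (∀ t ∈ Icc 0 T, HasDerivWithinAt x (F (x t)) (Icc 0 T) t) ∧
      ∀ t ∈ Icc 0 T, ‖x t‖ ^ 2 ≤ Real.exp (2 * C * t) * ‖x₀‖ ^ 2 := by
  set R : ℝ := Real.exp (2 * C * T) * ‖x₀‖ ^ 2 + 1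
  have hR : 1 ≤ R := le_add_of_nonneg_left (by positivity)
  let φ : ContDiffBump (0 : E) := ⟨R, R + 1, by linarith, by linarith⟩
  have hφF : ContDiff ℝ 1 fun x => φ x • F x := φ.contDiff.smul hF
  have hsupp : HasCompactSupport fun x => φ x • F x := φ.hasCompactSupport.smul_right
  obtain ⟨K, hK⟩ := hφF.lipschitzWith_of_hasCompactSupport hsupp one_ne_zero
  obtain ⟨L, hL⟩ := hφF.continuous.bounded_above_of_compact_support hsupp
  obtain ⟨x, hx₀, hx⟩ := exists_solution_of_lipschitzWith_of_norm_le hK hL hT x₀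
  have hcutoff : ∀ y, inner ℝ y (φ y • F y) ≤ C * ‖y‖ ^ 2 := fun y => by
    rw [inner_smul_right]
    calc φ y * inner ℝ y (F y) ≤ φ y * (C * ‖y‖ ^ 2) :=
          mul_le_mul_of_nonneg_left (hinner y) φ.nonneg
      _ ≤ C * ‖y‖ ^ 2 := mul_le_of_le_one_left (by positivity) φ.le_one
  have henergy : ∀ t ∈ Icc 0 T, ‖x t‖ ^ 2 ≤ Real.exp (2 * C * t) * ‖x₀‖ ^ 2 := fun t ht =>
    hx₀ ▸ norm_sq_le_exp_of_inner_le hx (fun t _ => hcutoff (x t)) ht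
  have hφ : ∀ t ∈ Icc 0 T, φ (x t) = 1 := fun t ht => by
    refine φ.one_of_mem_closedBall (mem_closedBall_zero_iff.2 ?_)
    have hsq : ‖x t‖ ^ 2 ≤ R := calc
      ‖x t‖ ^ 2 ≤ Real.exp (2 * C * t) * ‖x₀‖ ^ 2 := henergy t ht
      _ ≤ Real.exp (2 * C * T) * ‖x₀‖ ^ 2 := by gcongr; exact ht.2
      _ ≤ R := le_add_of_nonneg_right zero_le_one
    change ‖x t‖ ≤ R
    nlinarith [norm_nonneg (x t)]
  exact ⟨x, hx₀, fun t ht => by simpa only [hφ t ht, one_smul] using hx t ht, henergy⟩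

theorem exists_solution_mem_of_inner_le [FiniteDimensional ℝ E] {V : Submodule ℝ E}
    (hF : ContDiff ℝ 1 F) (hFV : ∀ x ∈ V, F x ∈ V) (hC : 0 ≤ C)
    (hinner : ∀ x ∈ V, inner ℝ x (F x) ≤ C * ‖x‖ ^ 2) (hT : 0 ≤ T) {x₀ : E} (hx₀ : x₀ ∈ V) :
    ∃ x : ℝ → E, x 0 = x₀ ∧ (∀ t, x t ∈ V) ∧
      (∀ t ∈ Icc 0 T, HasDerivWithinAt x (F (x t)) (Icc 0 T) t) ∧
      ∀ t ∈ Icc 0 T, ‖x t‖ ^ 2 ≤ Real.exp (2 * C * t) * ‖x₀‖ ^ 2 := by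
  obtain ⟨x, hx0, hx, henergy⟩ := exists_solution_of_inner_le
    (F := fun y : V => V.orthogonalProjectionOnto (F y))
    (V.orthogonalProjectionOnto.contDiff.comp (hF.comp V.subtypeL.contDiff)) hC
    (fun y => by
      rw [Submodule.inner_orthogonalProjectionOnto_eq_of_mem_left]
      exact hinner y y.2) hT ⟨x₀, hx₀⟩
  refine ⟨fun t => x t, congr_arg _ hx0, fun t => (x t).2, fun t ht => ?_, henergy⟩
  have hproj : V.subtypeL (V.orthogonalProjectionOnto (F (x t))) = F (x t) :=
    congr_arg _ (Submodule.orthogonalProjectionOnto_mem_subspace_eq_self ⟨_, hFV _ (x t).2⟩)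
  exact hproj ▸ V.subtypeL.hasFDerivAt.comp_hasDerivWithinAt t (hx t ht)

end EnergyODE

/-! ### The nonlinearity conserves energy -/

-- Each of the three cyclic relabelings of `(p, q, -p - q)` gives the same sum, and the three
-- summands add up to zero.
theorem tsum_cyclic_eq_zero {u : ℤ → ℂ} (hsum : Summable fun p : ℤ × ℤ =>
    (p.1 : ℂ) * (u p.1 * u p.2 * u (-p.1 - p.2))) :
    ∑' p : ℤ × ℤ, (p.1 : ℂ) * (u p.1 * u p.2 * u (-p.1 - p.2)) = 0 := by
  set S := ∑' p : ℤ × ℤ, (p.1 : ℂ) * (u p.1 * u p.2 * u (-p.1 - p.2))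
  let cycle : ℤ × ℤ ≃ ℤ × ℤ :=
    { toFun := fun p => (-p.1 - p.2, p.1)
      invFun := fun p => (p.2, -p.1 - p.2)
      left_inv := fun p => Prod.ext rfl (by simp)
      right_inv := fun p => Prod.ext (by ring) rfl }
  have hswap : HasSum (fun p : ℤ × ℤ => (p.2 : ℂ) * (u p.1 * u p.2 * u (-p.1 - p.2))) S := by
    refine ((Equiv.prodComm ℤ ℤ).hasSum_iff.2 hsum.hasSum).congr_fun fun p => ?_
    simp [sub_eq_add_neg, add_comm, mul_comm (u p.1)]
  have hcycle : HasSum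
      (fun p : ℤ × ℤ => (-p.1 - p.2 : ℂ) * (u p.1 * u p.2 * u (-p.1 - p.2))) S := by
    refine (cycle.hasSum_iff.2 hsum.hasSum).congr_fun fun p => ?_
    simp only [cycle, Function.comp, Equiv.coe_fn_mk, Int.cast_sub, Int.cast_neg]
    ring_nf
  have hzero : HasSum (fun _ : ℤ × ℤ => (0 : ℂ)) (S + S + S) := by
    refine ((hsum.hasSum.add hswap).add hcycle).congr_fun fun p => ?_
    ring
  linear_combination (1 / 3 : ℂ) * hzero.unique hasSum_zero

theorem tsum_mul_selfConv_eq_zero {u : ℤ → ℂ} (hu : (Function.support u).Finite) :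
    ∑' k : ℤ, (k : ℂ) * u (-k) * selfConv u k = 0 := by
  have hsum : Summable fun p : ℤ × ℤ => (p.1 : ℂ) * (u p.1 * u p.2 * u (-p.1 - p.2)) :=
    summable_of_hasFiniteSupport <| (hu.prod hu).subset fun p hp => by
      simp only [Function.mem_support, mul_ne_zero_iff] at hp
      exact ⟨hp.2.1.1, hp.2.1.2⟩
  rw [← neg_eq_zero, ← tsum_cyclic_eq_zero hsum, hsum.tsum_prod, ← (Equiv.neg ℤ).tsum_eq,
    ← tsum_neg]
  refine tsum_congr fun p => ?_
  rw [selfConv, ← tsum_mul_left, ← tsum_neg]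
  refine tsum_congr fun q => ?_
  simp only [Equiv.neg_apply, neg_neg, Int.cast_neg]
  ring

/-! ### Galerkin approximation -/

theorem selfConv_eq_sum {s : Finset ℤ} {u : ℤ → ℂ} (hu : ∀ k ∉ s, u k = 0) (k : ℤ) :
    selfConv u k = ∑ j ∈ s, u j * u (k - j) :=
  tsum_eq_sum fun j hj => by rw [hu j hj, zero_mul]

theorem continuousOn_selfConv_of_eq_zero {X : Type*} [TopologicalSpace X] {S : Set X}
    {s : Finset ℤ} {u : X → ℤ → ℂ} (hu : ∀ x, ∀ k ∉ s, u x k = 0)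
    (hcont : ∀ k, ContinuousOn (fun x => u x k) S) (k : ℤ) :
    ContinuousOn (fun x => selfConv (u x) k) S := by
  simp only [selfConv_eq_sum (hu _)]
  exact continuousOn_finsetSum s fun j _ => (hcont j).mul (hcont (k - j))

/-- Extension by zero to all modes of a vector indexed by a finite set of modes. -/
noncomputable def zeroExtend (s : Finset ℤ) : EuclideanSpace ℂ s →ₗ[ℝ] ℤ → ℂ where
  toFun x k := if h : k ∈ s then x ⟨k, h⟩ else 0
  map_add' x y := by
    ext k
    by_cases hk : k ∈ s <;> simp [hk]
  map_smul' r x := by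
    ext k
    by_cases hk : k ∈ s <;> simp [hk]

/-- The Galerkin vector field on the modes in `s` of `u = Φ_η`, which solves the differentiated
equation `u_τ = -3u_ηηηη - u_ηη - (u² / 2)_η`. -/
noncomputable def galerkinField (ω : ℝ) (s : Finset ℤ) (x : EuclideanSpace ℂ s) :
    EuclideanSpace ℂ s :=
  WithLp.toLp 2 fun k : s => -linearSymbol ω k * zeroExtend s x k +
    derivSymbol ω k * (-(1 / 2) * selfConv (zeroExtend s x) k)

section GalerkinField

variable {s : Finset ℤ} {k : ℤ}

theorem zeroExtend_of_mem (x : EuclideanSpace ℂ s) (hk : k ∈ s) :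
    zeroExtend s x k = x ⟨k, hk⟩ := dif_pos hk

theorem zeroExtend_of_notMem (x : EuclideanSpace ℂ s) (hk : k ∉ s) : zeroExtend s x k = 0 :=
  dif_neg hk

theorem norm_sq_eq_sum_zeroExtend (x : EuclideanSpace ℂ s) :
    ‖x‖ ^ 2 = ∑ k ∈ s, ‖zeroExtend s x k‖ ^ 2 := by
  rw [EuclideanSpace.norm_sq_eq, ← Finset.sum_coe_sort s]
  exact Finset.sum_congr rfl fun k _ => by rw [zeroExtend_of_mem x k.2]

theorem contDiff_zeroExtend (s : Finset ℤ) (k : ℤ) :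
    ContDiff ℝ 1 fun x : EuclideanSpace ℂ s => zeroExtend s x k :=
  (LinearMap.proj k ∘ₗ zeroExtend s).toContinuousLinearMap.contDiff

theorem hasDerivWithinAt_zeroExtend {x : ℝ → EuclideanSpace ℂ s} {x' : EuclideanSpace ℂ s}
    {S : Set ℝ} {t : ℝ} (hx : HasDerivWithinAt x x' S t) (k : ℤ) :
    HasDerivWithinAt (fun t => zeroExtend s (x t) k) (zeroExtend s x' k) S t :=
  (LinearMap.proj k ∘ₗ zeroExtend s).toContinuousLinearMap.hasFDerivAt.comp_hasDerivWithinAt t hx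

theorem contDiff_galerkinField (ω : ℝ) (s : Finset ℤ) : ContDiff ℝ 1 (galerkinField ω s) := by
  refine contDiff_piLp' 2 fun k => ?_
  have hconv : ContDiff ℝ 1 fun x : EuclideanSpace ℂ s => selfConv (zeroExtend s x) k := by
    simp only [fun x => selfConv_eq_sum (fun k => zeroExtend_of_notMem (s := s) (k := k) x)]
    exact ContDiff.sum fun j _ => (contDiff_zeroExtend s j).mul (contDiff_zeroExtend s _)
  exact (contDiff_const.mul (contDiff_zeroExtend s k)).add
    (contDiff_const.mul (contDiff_const.mul hconv))

theorem zeroExtend_galerkinField (ω : ℝ) (x : EuclideanSpace ℂ s) (hk : k ∈ s) :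
    zeroExtend s (galerkinField ω s x) k = -linearSymbol ω k * zeroExtend s x k +
      derivSymbol ω k * (-(1 / 2) * selfConv (zeroExtend s x) k) :=
  zeroExtend_of_mem _ hk

theorem isHermitianSeq_zeroExtend (hs : ∀ k ∈ s, -k ∈ s) {x : EuclideanSpace ℂ s} {c : ℤ → ℂ}
    (hc : IsHermitianSeq c) (hx : ∀ k ∈ s, zeroExtend s x k = c k) :
    IsHermitianSeq (zeroExtend s x) := fun k => by
  by_cases hk : k ∈ s
  · rw [hx k hk, hx (-k) (hs k hk), hc k]
  · have hnk : -k ∉ s := fun h => hk (neg_neg k ▸ hs _ h)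
    rw [zeroExtend_of_notMem x hk, zeroExtend_of_notMem x hnk, map_zero]

theorem isHermitianSeq_galerkinField (hs : ∀ k ∈ s, -k ∈ s) (ω : ℝ) {x : EuclideanSpace ℂ s}
    (hx : IsHermitianSeq (zeroExtend s x)) :
    IsHermitianSeq (zeroExtend s (galerkinField ω s x)) := by
  refine isHermitianSeq_zeroExtend hs (fun k => ?_) fun k hk => zeroExtend_galerkinField ω x hk
  simp [Complex.conj_ofNat, linearSymbol_neg, derivSymbol_neg, hx k, isHermitianSeq_selfConv hx k]

theorem inner_galerkinField_le (ω : ℝ) {x : EuclideanSpace ℂ s}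
    (hx : IsHermitianSeq (zeroExtend s x)) :
    inner ℝ x (galerkinField ω s x) ≤ 1 * ‖x‖ ^ 2 := by
  set u := zeroExtend s x
  have hu : ∀ k ∉ s, u k = 0 := fun k => zeroExtend_of_notMem x
  have hconserved : ∑ k ∈ s, (k : ℂ) * u (-k) * selfConv u k = 0 := by
    have hfin : (Function.support u).Finite :=
      s.finite_toSet.subset fun k hk => by_contra fun h => hk (hu k h)
    rw [← tsum_mul_selfConv_eq_zero hfin]
    refine (tsum_eq_sum fun k hk => ?_).symm
    rw [hx k, hu k hk, map_zero, mul_zero, zero_mul]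
  have hmode : ∀ k : s, inner ℝ (x k) (galerkinField ω s x k) =
      -linearSymbol ω k * ‖u k‖ ^ 2 +
        (-(1 / 2) * (Complex.I * ω) * ((k : ℤ) * u (-k) * selfConv u k)).re := fun k => by
    have hxk : x k = u k := (zeroExtend_of_mem x k.2).symm
    rw [Complex.inner, hxk, hx k, galerkinField, add_mul, Complex.add_re, mul_assoc,
      Complex.mul_conj, Complex.normSq_eq_norm_sq, ← Complex.ofReal_neg, ← Complex.ofReal_mul,
      Complex.ofReal_re, derivSymbol]
    congr 2
    ring
  calc inner ℝ x (galerkinField ω s x)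
    _ = ∑ k ∈ s, (-linearSymbol ω k * ‖u k‖ ^ 2 +
        (-(1 / 2) * (Complex.I * ω) * (k * u (-k) * selfConv u k)).re) := by
      rw [PiLp.inner_apply, ← Finset.sum_coe_sort s]
      exact Finset.sum_congr rfl fun k _ => hmode k
    _ = ∑ k ∈ s, -linearSymbol ω k * ‖u k‖ ^ 2 := by
      rw [Finset.sum_add_distrib, ← Complex.re_sum, ← Finset.mul_sum, hconserved, mul_zero,
        Complex.zero_re, add_zero]
    _ ≤ ∑ k ∈ s, 1 * ‖u k‖ ^ 2 := by
      gcongr with k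
      linarith [linearSymbol_add_one_pos ω k]
    _ = 1 * ‖x‖ ^ 2 := by rw [← Finset.mul_sum, ← norm_sq_eq_sum_zeroExtend]

theorem exists_galerkin_gradient {T : ℝ} (hs : ∀ k ∈ s, -k ∈ s) (hT : 0 ≤ T) (ω : ℝ)
    {u₀ : ℤ → ℂ} (hu₀ : IsHermitianSeq u₀) :
    ∃ u : ℝ → ℤ → ℂ, (∀ t, ∀ k ∉ s, u t k = 0) ∧ (∀ k ∈ s, u 0 k = u₀ k) ∧
      (∀ t, IsHermitianSeq (u t)) ∧
      (∀ k ∈ s, ∀ t ∈ Icc 0 T, HasDerivWithinAt (fun t => u t k) (-linearSymbol ω k * u t k +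
        derivSymbol ω k * (-(1 / 2) * selfConv (u t) k)) (Icc 0 T) t) ∧
      ∀ t ∈ Icc 0 T, ∑ k ∈ s, ‖u t k‖ ^ 2 ≤ Real.exp (2 * t) * ∑ k ∈ s, ‖u₀ k‖ ^ 2 := by
  let V : Submodule ℝ (EuclideanSpace ℂ s) :=
    { carrier := {x | IsHermitianSeq (zeroExtend s x)}
      zero_mem' := fun k => by simp
      add_mem' := fun hx hy k => by simp [hx k, hy k]
      smul_mem' := fun r x hx k => by simp [hx k] }
  set x₀ : EuclideanSpace ℂ s := WithLp.toLp 2 fun k => u₀ k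
  have hx₀ : ∀ k ∈ s, zeroExtend s x₀ k = u₀ k := fun k hk => zeroExtend_of_mem _ hk
  obtain ⟨x, hx0, hxV, hx, henergy⟩ := exists_solution_mem_of_inner_le (V := V)
    (contDiff_galerkinField ω s) (fun x => isHermitianSeq_galerkinField hs ω) zero_le_one
    (fun x => inner_galerkinField_le ω) hT (isHermitianSeq_zeroExtend hs hu₀ hx₀)
  refine ⟨fun t => zeroExtend s (x t), fun t k => zeroExtend_of_notMem (x t),
    fun k hk => by simp only [hx0, hx₀ k hk], hxV, fun k hk t ht => ?_, fun t ht => ?_⟩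
  · exact zeroExtend_galerkinField ω (x t) hk ▸ hasDerivWithinAt_zeroExtend (hx t ht) k
  · have hsum : ‖x₀‖ ^ 2 = ∑ k ∈ s, ‖u₀ k‖ ^ 2 :=
      (norm_sq_eq_sum_zeroExtend x₀).trans (Finset.sum_congr rfl fun k hk => by rw [hx₀ k hk])
    rw [← norm_sq_eq_sum_zeroExtend, ← hsum]
    simpa only [mul_one] using henergy t ht

end GalerkinField

/-! ### The Galerkin approximation of the integrated equation -/

/-- The Fourier coefficients of `-(Φ_η)² / 2`, where `c` are those of `Φ`. -/
noncomputable def ksNonlinearity (ω : ℝ) (c : ℤ → ℂ) (k : ℤ) : ℂ :=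
  -(1 / 2) * selfConv (fun j => derivSymbol ω j * c j) k

/-- The right-hand side `-3Φ_ηηηη - Φ_ηη - (Φ_η)² / 2` of the equation in Fourier coefficients. -/
noncomputable def ksField (ω : ℝ) (c : ℤ → ℂ) (k : ℤ) : ℂ :=
  -linearSymbol ω k * c k + ksNonlinearity ω c k

theorem exists_hasDecay_ksNonlinearity {n : ℕ} (hn : 2 ≤ n) (ω B : ℝ) :
    ∃ B', ∀ c, HasDecay (n + 1) B c → HasDecay n B' (ksNonlinearity ω c) :=
  ⟨_, fun _ hc => (hasDecay_selfConv (hc.derivSymbol_mul ω) hn).const_mul _⟩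

theorem tendsto_ksNonlinearity {ι : Type*} {l : Filter ι} {n : ℕ} {B : ℝ} {c : ι → ℤ → ℂ}
    {d : ℤ → ℂ} (hn : 2 ≤ n) (ω : ℝ) (hdecay : ∀ᶠ i in l, HasDecay (n + 1) B (c i))
    (hlim : ∀ k, Tendsto (fun i => c i k) l (𝓝 (d k))) (k : ℤ) :
    Tendsto (fun i => ksNonlinearity ω (c i) k) l (𝓝 (ksNonlinearity ω d k)) :=
  (tendsto_selfConv hn (hdecay.mono fun _ hi => hi.derivSymbol_mul ω)
    (fun j => (hlim j).const_mul _) k).const_mul _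

/-- `a` is the Galerkin approximation, on the modes in `s` and on `[0, T]`, of the solution with
initial coefficients `a₀`. The energy bound is the `L²` estimate for the gradient, which is uniform
in `s`. -/
structure IsGalerkinSolution (ω : ℝ) (a₀ : ℤ → ℂ) (s : Finset ℤ) (T : ℝ) (a : ℝ → ℤ → ℂ) :
    Prop where
  eq_zero : ∀ t, ∀ k ∉ s, a t k = 0
  initial : ∀ k ∈ s, a 0 k = a₀ k
  isHermitianSeq : ∀ t ∈ Icc 0 T, IsHermitianSeq (a t)
  hasDerivWithinAt : ∀ k ∈ s, ∀ t ∈ Icc 0 T,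
    HasDerivWithinAt (fun t => a t k) (ksField ω (a t) k) (Icc 0 T) t
  energy_le : ∀ t ∈ Icc 0 T, ∑ k ∈ s, ‖derivSymbol ω k * a t k‖ ^ 2 ≤
    Real.exp (2 * t) * ∑ k ∈ s, ‖derivSymbol ω k * a₀ k‖ ^ 2

-- The gradient modes `u` solve a closed system, and determine `a` by integrating the linear
-- equation forced by `-u² / 2`; only the mean of `Φ` is not already recovered from `u` itself.
theorem exists_isGalerkinSolution {s : Finset ℤ} {T : ℝ} {a₀ : ℤ → ℂ} (hs : ∀ k ∈ s, -k ∈ s)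
    (hT : 0 ≤ T) (ω : ℝ) (ha₀ : IsHermitianSeq a₀) :
    ∃ a, IsGalerkinSolution ω a₀ s T a := by
  obtain ⟨u, hu_zero, hu_init, hu_symm, hu_deriv, hu_energy⟩ :=
    exists_galerkin_gradient hs hT ω (ha₀.derivSymbol_mul ω)
  set g : ℝ → ℤ → ℂ := fun t k => -(1 / 2) * selfConv (u t) k
  have hu_cont : ∀ k, ContinuousOn (fun t => u t k) (Icc 0 T) := fun k => by
    by_cases hk : k ∈ s
    · exact fun t ht => (hu_deriv k hk t ht).continuousWithinAt
    · simp only [hu_zero _ k hk, continuousOn_const]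
  have hg_cont : ∀ k, ContinuousOn (fun t => g t k) (Icc 0 T) := fun k =>
    continuousOn_const.mul (continuousOn_selfConv_of_eq_zero hu_zero hu_cont k)
  set a : ℝ → ℤ → ℂ := fun t k => if k ∈ s then linearFlow ω a₀ g t k else 0
  have ha : ∀ k ∈ s, (fun t => a t k) = fun t => linearFlow ω a₀ g t k := fun k hk =>
    funext fun t => if_pos hk
  have ha_zero : ∀ t, ∀ k ∉ s, a t k = 0 := fun t k hk => if_neg hk
  have hgrad : ∀ t ∈ Icc 0 T, ∀ k, derivSymbol ω k * a t k = u t k := fun t ht k => by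
    by_cases hk : k ∈ s
    · rw [congrFun (ha k hk) t, linearFlow, mul_duhamel, ← hu_init k hk]
      exact (eq_duhamel_of_hasDerivWithinAt (continuousOn_const.mul (hg_cont k))
        (hu_deriv k hk) ht).symm
    · rw [ha_zero t k hk, hu_zero t k hk, mul_zero]
  refine ⟨a, ha_zero, fun k hk => ?_, fun t ht k => ?_, fun k hk t ht => ?_, fun t ht => ?_⟩
  · rw [congrFun (ha k hk) 0, linearFlow, duhamel_zero_right]
  · by_cases hk : k ∈ s
    · rw [congrFun (ha k hk) t, congrFun (ha (-k) (hs k hk)) t]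
      exact isHermitianSeq_linearFlow ht.1 ha₀
        (fun r _ => (isHermitianSeq_selfConv (hu_symm r)).neg_half_mul) k
    · rw [ha_zero t k hk, ha_zero t (-k) fun h => hk (neg_neg k ▸ hs _ h), map_zero]
  · simp only [ksField, ksNonlinearity, hgrad t ht, ha k hk, congrFun (ha k hk) t]
    exact hasDerivWithinAt_duhamel_Icc (hg_cont k) ht
  · simp only [hgrad t ht]
    exact hu_energy t ht

namespace IsGalerkinSolution

variable {ω T t : ℝ} {a₀ : ℤ → ℂ} {s : Finset ℤ} {a : ℝ → ℤ → ℂ}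

theorem continuousOn (ha : IsGalerkinSolution ω a₀ s T a) (k : ℤ) :
    ContinuousOn (fun t => a t k) (Icc 0 T) := by
  by_cases hk : k ∈ s
  · exact fun t ht => (ha.hasDerivWithinAt k hk t ht).continuousWithinAt
  · simp only [ha.eq_zero _ k hk, continuousOn_const]

theorem continuousOn_ksNonlinearity (ha : IsGalerkinSolution ω a₀ s T a) (k : ℤ) :
    ContinuousOn (fun t => ksNonlinearity ω (a t) k) (Icc 0 T) := by
  have hsupp : ∀ t, ∀ j ∉ s, derivSymbol ω j * a t j = 0 := fun t j hj => by
    rw [ha.eq_zero t j hj, mul_zero]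
  exact continuousOn_const.mul <| continuousOn_selfConv_of_eq_zero hsupp
    (fun j => continuousOn_const.mul (ha.continuousOn j)) k

theorem eq_linearFlow (ha : IsGalerkinSolution ω a₀ s T a) {k : ℤ} (hk : k ∈ s)
    (ht : t ∈ Icc 0 T) : a t k = linearFlow ω a₀ (fun r => ksNonlinearity ω (a r)) t k := by
  rw [linearFlow, ← ha.initial k hk]
  exact eq_duhamel_of_hasDerivWithinAt (ha.continuousOn_ksNonlinearity k)
    (ha.hasDerivWithinAt k hk) ht

theorem norm_ksNonlinearity_le (ha : IsGalerkinSolution ω a₀ s T a) {E : ℝ}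
    (hE : ∑ k ∈ s, ‖derivSymbol ω k * a₀ k‖ ^ 2 ≤ E) (ht : t ∈ Icc 0 T) (k : ℤ) :
    ‖ksNonlinearity ω (a t) k‖ ≤ 1 / 2 * (Real.exp (2 * t) * E) := by
  have hsupp : ∀ j ∉ s, ‖derivSymbol ω j * a t j‖ ^ 2 = 0 := fun j hj => by
    rw [ha.eq_zero t j hj, mul_zero, norm_zero, zero_pow two_ne_zero]
  calc ‖ksNonlinearity ω (a t) k‖
    _ = 1 / 2 * ‖selfConv (fun j => derivSymbol ω j * a t j) k‖ := by
      rw [ksNonlinearity, norm_mul, norm_neg, norm_div, norm_one, Complex.norm_ofNat]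
    _ ≤ 1 / 2 * ∑' j, ‖derivSymbol ω j * a t j‖ ^ 2 := by
      gcongr
      exact norm_selfConv_le (summable_of_ne_finset_zero hsupp) k
    _ = 1 / 2 * ∑ j ∈ s, ‖derivSymbol ω j * a t j‖ ^ 2 := by rw [tsum_eq_sum hsupp]
    _ ≤ 1 / 2 * (Real.exp (2 * t) * E) := by
      gcongr
      exact (ha.energy_le t ht).trans (mul_le_mul_of_nonneg_left hE (Real.exp_pos _).le)

theorem hasDecay (ha : IsGalerkinSolution ω a₀ s T a) {A G τ : ℝ} (hω : ω ≠ 0)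
    (ha₀ : HasDecay 4 A a₀) (ht : t ∈ Icc 0 T) (htτ : t ≤ τ)
    (hG : ∀ r ∈ Icc 0 t, ∀ k, ‖ksNonlinearity ω (a r) k‖ ≤ G) :
    HasDecay 4 (Real.exp τ * (A + (16 + 8 / ω ^ 4) * G)) (a t) := fun k => by
  have hflow := hasDecay_linearFlow (n := 0) hω ⟨ht.1, htτ⟩ ha₀ fun r hr k => by
    simpa using hG r hr k
  by_cases hk : k ∈ s
  · exact ha.eq_linearFlow hk ht ▸ hflow k
  · rw [ha.eq_zero t k hk, norm_zero]
    exact (norm_nonneg _).trans (hflow k)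

theorem norm_sub_le (ha : IsGalerkinSolution ω a₀ s T a) {B τ : ℝ} {k : ℤ}
    (hdecay : ∀ r ∈ Icc 0 T, r ≤ τ → ‖a r k‖ ≤ B)
    (hG : ∀ r ∈ Icc 0 T, r ≤ τ → ‖ksNonlinearity ω (a r) k‖ ≤ B) {t' : ℝ}
    (ht : t ∈ Icc 0 T) (htτ : t ≤ τ) (ht' : t' ∈ Icc 0 T) (ht'τ : t' ≤ τ) :
    ‖a t' k - a t k‖ ≤ (|linearSymbol ω k| + 1) * B * ‖t' - t‖ := by
  by_cases hk : k ∈ s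
  · have hsub : Icc 0 (min T τ) ⊆ Icc 0 T := Icc_subset_Icc_right (min_le_left _ _)
    refine Convex.norm_image_sub_le_of_norm_hasDerivWithin_le
      (fun r hr => (ha.hasDerivWithinAt k hk r (hsub hr)).mono hsub) (fun r hr => ?_)
      (convex_Icc 0 (min T τ)) ⟨ht.1, le_min ht.2 htτ⟩ ⟨ht'.1, le_min ht'.2 ht'τ⟩
    have hrτ := hr.2.trans (min_le_right _ _)
    calc ‖ksField ω (a r) k‖
      _ ≤ |linearSymbol ω k| * ‖a r k‖ + ‖ksNonlinearity ω (a r) k‖ := by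
        refine (norm_add_le _ _).trans_eq ?_
        rw [norm_mul, norm_neg, Complex.norm_real, Real.norm_eq_abs]
      _ ≤ |linearSymbol ω k| * B + B := by
        gcongr
        exacts [hdecay r (hsub hr) hrτ, hG r (hsub hr) hrτ]
      _ = (|linearSymbol ω k| + 1) * B := by ring
  · have hB : 0 ≤ B := (norm_nonneg _).trans (hdecay t ht htτ)
    rw [ha.eq_zero t k hk, ha.eq_zero t' k hk, sub_zero, norm_zero]
    positivity

end IsGalerkinSolution

theorem exists_forall_isGalerkinSolution_bound {ω A : ℝ} {a₀ : ℤ → ℂ} (hω : ω ≠ 0)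
    (ha₀ : HasDecay 4 A a₀) (τ : ℝ) :
    ∃ B, ∀ s T a, IsGalerkinSolution ω a₀ s T a → ∀ t ∈ Icc 0 T, t ≤ τ →
      HasDecay 4 B (a t) ∧ ∀ k, ‖ksNonlinearity ω (a t) k‖ ≤ B := by
  have hd := ha₀.derivSymbol_mul (n := 3) ω
  have hsum : Summable fun k => ‖derivSymbol ω k * a₀ k‖ ^ 2 := by
    refine .of_nonneg_of_le (fun k => sq_nonneg _) (fun k => ?_)
      ((hd.summable_norm (by norm_num)).mul_left (|ω| * A))
    rw [sq]
    exact mul_le_mul_of_nonneg_right (hd.norm_le k) (norm_nonneg _)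
  set E := ∑' k, ‖derivSymbol ω k * a₀ k‖ ^ 2
  have : 0 ≤ E := tsum_nonneg fun k => sq_nonneg _
  set G := 1 / 2 * (Real.exp (2 * τ) * E)
  refine ⟨max (Real.exp τ * (A + (16 + 8 / ω ^ 4) * G)) G, fun s T a ha t ht htτ => ?_⟩
  have hG : ∀ r ∈ Icc 0 t, ∀ k, ‖ksNonlinearity ω (a r) k‖ ≤ G := fun r hr k => by
    refine (ha.norm_ksNonlinearity_le (hsum.sum_le_tsum s fun k _ => sq_nonneg _)
      ⟨hr.1, hr.2.trans ht.2⟩ k).trans ?_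
    have := hr.2.trans htτ
    simp only [G]
    gcongr
  exact ⟨(ha.hasDecay hω ha₀ ht htτ hG).mono (le_max_left _ _),
    fun k => (hG t (right_mem_Icc.2 ht.1) k).trans (le_max_right _ _)⟩

/-! ### Passage to the limit -/

theorem exists_subseq_tendsto_of_equicontinuous {X ι α : Type*} [TopologicalSpace X]
    [TopologicalSpace.SeparableSpace X] [Countable ι] [PseudoMetricSpace α] {f : ℕ → X → ι → α}
    {K : X → ι → Set α} (hK : ∀ x i, IsCompact (K x i)) (hf : ∀ n x i, f n x i ∈ K x i)
    (hequi : ∀ i, Equicontinuous fun n x => f n x i) :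
    ∃ φ : ℕ → ℕ, StrictMono φ ∧ ∃ g : X → ι → α, (∀ i, Continuous fun x => g x i) ∧
      ∀ x i, Tendsto (fun n => f (φ n) x i) atTop (𝓝 (g x i)) := by
  obtain ⟨S, hS, hdense⟩ := TopologicalSpace.exists_countable_dense X
  have : Countable S := hS
  obtain ⟨z, -, φ, hφ, hz⟩ :=
    (isCompact_univ_pi fun p : S × ι => hK p.1 p.2).tendsto_subseq
      (x := fun n p => f n p.1 p.2) fun n p _ => hf n p.1 p.2
  rw [tendsto_pi_nhds] at hz
  suffices hcauchy : ∀ x i, CauchySeq fun n => f (φ n) x i by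
    choose g _ hg using fun x i => cauchySeq_tendsto_of_isComplete (hK x i).isComplete
      (fun n => hf (φ n) x i) (hcauchy x i)
    exact ⟨φ, hφ, g, fun i => (tendsto_pi_nhds.2 fun x => hg x i).continuous_of_equicontinuous
      ((hequi i).comp φ), hg⟩
  intro x i
  refine Metric.cauchySeq_iff'.2 fun ε hε => ?_
  obtain ⟨y, hyS, hyx⟩ := hdense.inter_nhds_nonempty
    (Metric.equicontinuousAt_iff_right.1 (hequi i x) (ε / 3) (by positivity))
  obtain ⟨N, hN⟩ := Metric.cauchySeq_iff'.1 (hz (⟨y, hyS⟩, i)).cauchySeq (ε / 3) (by positivity)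
  refine ⟨N, fun n hn => ?_⟩
  calc dist (f (φ n) x i) (f (φ N) x i)
    _ ≤ dist (f (φ n) x i) (f (φ n) y i) + dist (f (φ n) y i) (f (φ N) y i) +
        dist (f (φ N) y i) (f (φ N) x i) := dist_triangle4 _ _ _ _
    _ < ε / 3 + ε / 3 + ε / 3 := by
      gcongr
      exacts [hyx (φ n), hN n hn, dist_comm (f (φ N) x i) _ ▸ hyx (φ N)]
    _ = ε := add_thirds ε

/-- `a` consists of the Fourier modes of a real global solution with initial coefficients `a₀`, in
the mild sense of Duhamel's formula and with decay enough to make sense of the nonlinearity. -/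
structure IsMildSolution (ω : ℝ) (a₀ : ℤ → ℂ) (a : ℝ → ℤ → ℂ) : Prop where
  continuousOn : ∀ k, ContinuousOn (fun t => a t k) (Ici 0)
  isHermitianSeq : ∀ t ∈ Ici (0 : ℝ), IsHermitianSeq (a t)
  exists_hasDecay : ∀ τ, ∃ B, ∀ t ∈ Icc 0 τ, HasDecay 4 B (a t)
  eq_linearFlow : ∀ t ∈ Ici (0 : ℝ),
    a t = linearFlow ω a₀ (fun s => ksNonlinearity ω (a s)) t

theorem exists_subseq_tendsto_galerkin {ω A : ℝ} {a₀ : ℤ → ℂ} (hω : ω ≠ 0)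
    (ha₀ : HasDecay 4 A a₀) {s : ℕ → Finset ℤ} {a : ℕ → ℝ → ℤ → ℂ}
    (ha : ∀ N : ℕ, IsGalerkinSolution ω a₀ (s N) N (a N)) :
    ∃ φ : ℕ → ℕ, StrictMono φ ∧ ∃ b : ℝ → ℤ → ℂ, (∀ k, Continuous fun t => b t k) ∧
      ∀ t ∈ Ici 0, ∀ k, Tendsto (fun n => a (φ n) t k) atTop (𝓝 (b t k)) := by
  choose B hB using exists_forall_isGalerkinSolution_bound hω ha₀
  let clamp (N : ℕ) (t : ℝ) : ℝ := projIcc (0 : ℝ) N N.cast_nonneg t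
  have hclamp_mem : ∀ (N : ℕ) (t : ℝ), clamp N t ∈ Icc 0 (N : ℝ) := fun N t => (projIcc _ _ _ t).2
  have hclamp_le : ∀ N t, clamp N t ≤ |t| := fun N t => by
    simpa [clamp, coe_projIcc] using Or.inr (le_abs_self t)
  have hequi : ∀ k, Equicontinuous fun N t => a N (clamp N t) k := fun k t => by
    set L := (|linearSymbol ω k| + 1) * B (|t| + 1)
    refine Metric.equicontinuousAt_of_continuity_modulus (fun r => L * ‖t - r‖)
      (Continuous.tendsto' (by fun_prop) _ _ (by simp)) _ ?_
    filter_upwards [Metric.ball_mem_nhds t one_pos] with r hr N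
    have hrt : |r| ≤ |t| + 1 := by
      linarith [abs_sub_abs_le_abs_sub r t, Real.dist_eq r t ▸ Metric.mem_ball.1 hr]
    have hbound := hB (|t| + 1) _ _ _ (ha N)
    rw [dist_eq_norm]
    refine ((ha N).norm_sub_le (fun q hq hqt => (hbound q hq hqt).1.norm_le k)
      (fun q hq hqt => (hbound q hq hqt).2 k) (hclamp_mem N r) ((hclamp_le N r).trans hrt)
      (hclamp_mem N t) ((hclamp_le N t).trans (by linarith))).trans ?_
    have hL : 0 ≤ L := mul_nonneg (by positivity) <| (norm_nonneg _).trans <|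
      (hbound _ (hclamp_mem N r) ((hclamp_le N r).trans hrt)).2 k
    exact mul_le_mul_of_nonneg_left (abs_projIcc_sub_projIcc N.cast_nonneg) hL
  obtain ⟨φ, hφ, b, hb_cont, hb⟩ := exists_subseq_tendsto_of_equicontinuous
    (f := fun N t k => a N (clamp N t) k) (K := fun t _ => Metric.closedBall 0 (B |t|))
    (fun t _ => isCompact_closedBall 0 (B |t|))
    (fun N t k => mem_closedBall_zero_iff.2 <|
      (hB _ _ _ _ (ha N) _ (hclamp_mem N t) (hclamp_le N t)).1.norm_le k) hequi
  refine ⟨φ, hφ, b, hb_cont, fun t ht k => (hb t k).congr' ?_⟩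
  filter_upwards [hφ.tendsto_atTop.eventually (eventually_ge_atTop ⌈t⌉₊)] with n hn
  simp only [clamp, projIcc_of_mem _ (show t ∈ Icc 0 (φ n : ℝ) from ⟨ht, Nat.ceil_le.1 hn⟩)]

theorem exists_isMildSolution {ω A : ℝ} {a₀ : ℤ → ℂ} (hω : ω ≠ 0) (ha₀ : HasDecay 4 A a₀)
    (hsymm : IsHermitianSeq a₀) : ∃ a, IsMildSolution ω a₀ a := by
  choose a ha using fun N : ℕ => exists_isGalerkinSolution (s := Finset.Icc (-N : ℤ) N)
    (fun k hk => by rw [Finset.mem_Icc] at hk ⊢; lia) N.cast_nonneg ω hsymm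
  obtain ⟨φ, hφ, b, hb_cont, hb⟩ := exists_subseq_tendsto_galerkin hω ha₀ ha
  have htime : ∀ t : ℝ, ∀ᶠ n in atTop, t ≤ φ n := fun t =>
    (tendsto_natCast_atTop_atTop.comp hφ.tendsto_atTop).eventually_ge_atTop t
  have hbound : ∀ τ, ∃ B, ∀ᶠ n in atTop, ∀ t ∈ Icc 0 τ,
      HasDecay 4 B (a (φ n) t) ∧ ∀ k, ‖ksNonlinearity ω (a (φ n) t) k‖ ≤ B := fun τ => by
    obtain ⟨B, hB⟩ := exists_forall_isGalerkinSolution_bound hω ha₀ τ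
    refine ⟨B, (htime τ).mono fun n hn t ht => ?_⟩
    exact hB _ _ _ (ha (φ n)) t ⟨ht.1, ht.2.trans hn⟩ ht.2
  refine ⟨b, fun k => (hb_cont k).continuousOn, fun t ht k => ?_, fun τ => ?_,
    fun t ht => funext fun k => ?_⟩
  · exact tendsto_nhds_unique_of_eventuallyEq (hb t ht (-k))
      ((Complex.continuous_conj.tendsto _).comp (hb t ht k))
      ((htime t).mono fun n hn => (ha (φ n)).isHermitianSeq t ⟨ht, hn⟩ k)
  · obtain ⟨B, hB⟩ := hbound τ
    exact ⟨B, fun t ht k => le_of_tendsto (hb t ht.1 k).norm (hB.mono fun n hn => (hn t ht).1 k)⟩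
  · obtain ⟨B, hB⟩ := hbound t
    have hmode : ∀ᶠ n in atTop, k ∈ Finset.Icc (-(φ n : ℤ)) (φ n) := by
      filter_upwards [hφ.tendsto_atTop.eventually_ge_atTop k.natAbs] with n hn
      exact Finset.mem_Icc.2 (by lia)
    refine tendsto_nhds_unique_of_eventuallyEq (hb t ht k) (tendsto_duhamel ht
      ((htime t).mono fun n hn => ((ha (φ n)).continuousOn_ksNonlinearity k).mono
        (Icc_subset_Icc_right hn))
      (hB.mono fun n hn s hs => (hn s hs).2 k)
      fun s hs => tendsto_ksNonlinearity (n := 3) (by norm_num) ω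
        (hB.mono fun n hn => (hn s hs).1) (hb s hs.1) k) ?_
    filter_upwards [htime t, hmode] with n hn hk
    exact (ha (φ n)).eq_linearFlow hk ⟨ht, hn⟩

/-! ### Regularity of mild solutions -/

namespace IsMildSolution

variable {ω A : ℝ} {a₀ : ℤ → ℂ} {a : ℝ → ℤ → ℂ}

theorem initial (ha : IsMildSolution ω a₀ a) : a 0 = a₀ := by
  rw [ha.eq_linearFlow 0 self_mem_Ici]
  exact funext fun k => duhamel_zero_right _ _ _

theorem continuousOn_ksNonlinearity (ha : IsMildSolution ω a₀ a) (k : ℤ) :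
    ContinuousOn (fun t => ksNonlinearity ω (a t) k) (Ici 0) := fun t ht => by
  obtain ⟨B, hB⟩ := ha.exists_hasDecay (t + 1)
  refine tendsto_ksNonlinearity (n := 3) (B := B) (by norm_num) ω ?_
    (fun j => ha.continuousOn j t ht) k
  filter_upwards [inter_mem_nhdsWithin (Ici 0) (Iic_mem_nhds (lt_add_one t))] with r hr
  exact hB r hr

theorem continuousOn_ksField (ha : IsMildSolution ω a₀ a) (k : ℤ) :
    ContinuousOn (fun t => ksField ω (a t) k) (Ici 0) :=
  (continuousOn_const.mul (ha.continuousOn k)).add (ha.continuousOn_ksNonlinearity k)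

theorem hasDerivWithinAt (ha : IsMildSolution ω a₀ a) (k : ℤ) {t : ℝ} (ht : t ∈ Ici 0) :
    HasDerivWithinAt (fun t => a t k) (ksField ω (a t) k) (Ici 0) t := by
  have hmild : ∀ r ∈ Ici 0, a r k = linearFlow ω a₀ (fun s => ksNonlinearity ω (a s)) r k :=
    fun r hr => congrFun (ha.eq_linearFlow r hr) k
  rw [ksField, hmild t ht]
  exact (hasDerivWithinAt_duhamel (ha.continuousOn_ksNonlinearity k) ht).congr_of_mem hmild ht

-- The nonlinearity loses one order of decay and the linear flow gains four.
theorem exists_hasDecay_six (ha : IsMildSolution ω a₀ a) (hω : ω ≠ 0) (ha₀ : HasDecay 6 A a₀)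
    (τ : ℝ) : ∃ B, ∀ t ∈ Icc 0 τ, HasDecay 6 B (a t) := by
  obtain ⟨B, hB⟩ := ha.exists_hasDecay τ
  obtain ⟨G, hG⟩ := exists_hasDecay_ksNonlinearity (n := 3) (by norm_num) ω B
  exact ⟨_, fun t ht => ha.eq_linearFlow t ht.1 ▸
    hasDecay_linearFlow (n := 2) hω ht ha₀ fun s hs =>
      (hG _ (hB s ⟨hs.1, hs.2.trans ht.2⟩)).of_le (by norm_num)⟩

theorem exists_hasDecay_ksField (ha : IsMildSolution ω a₀ a) (hω : ω ≠ 0)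
    (ha₀ : HasDecay 6 A a₀) (τ : ℝ) : ∃ B, ∀ t ∈ Icc 0 τ, HasDecay 2 B (ksField ω (a t)) := by
  obtain ⟨B, hB⟩ := ha.exists_hasDecay_six hω ha₀ τ
  obtain ⟨G, hG⟩ := exists_hasDecay_ksNonlinearity (n := 2) le_rfl ω B
  have hsymbol : ∀ k, ‖-(linearSymbol ω k : ℂ)‖ ≤ (3 * ω ^ 4 + ω ^ 2) * modeWeight k ^ 4 :=
    fun k => (norm_neg _).trans_le (norm_linearSymbol_le ω k)
  exact ⟨_, fun t ht => .add ((hB t ht).mul_of_norm_le (n := 2) hsymbol)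
    (hG _ ((hB t ht).of_le (by norm_num)))⟩

end IsMildSolution

/-! ### Fourier series -/

/-- The Fourier mode `e^{iωkη}`, a function on `ℝ` (not on a circle) so that `ω` is unrestricted. -/
noncomputable def mode (ω : ℝ) (k : ℤ) (x : ℝ) : ℂ := Complex.exp (derivSymbol ω k * x)

/-- The Fourier series with frequency `ω` and coefficients `c`; a junk value where it does not
converge unconditionally. -/
noncomputable def fourierSeries (ω : ℝ) (c : ℤ → ℂ) (x : ℝ) : ℂ := ∑' k, c k * mode ω k x

section Mode

variable (ω : ℝ) (k : ℤ) (x : ℝ)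

theorem norm_mode : ‖mode ω k x‖ = 1 := by
  rw [mode, derivSymbol, mul_assoc, mul_comm]
  exact_mod_cast Complex.norm_exp_ofReal_mul_I (ω * k * x)

theorem mode_mul_mode (j : ℤ) : mode ω j x * mode ω (k - j) x = mode ω k x := by
  rw [mode, mode, mode, ← Complex.exp_add]
  congr 1
  simp only [derivSymbol, Int.cast_sub]
  ring

theorem mode_neg : mode ω (-k) x = conj (mode ω k x) := by
  rw [mode, mode, ← Complex.exp_conj, map_mul, Complex.conj_ofReal, derivSymbol_neg]

theorem hasDerivAt_mode : HasDerivAt (mode ω k) (derivSymbol ω k * mode ω k x) x := by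
  have := ((Complex.ofRealCLM.hasDerivAt (x := x)).const_mul (derivSymbol ω k)).cexp
  exact this.congr_deriv (by simp [mode, mul_comm])

theorem continuous_mode : Continuous (mode ω k) :=
  continuous_iff_continuousAt.2 fun x => (hasDerivAt_mode ω k x).continuousAt

end Mode

theorem mode_eq_fourier (T : ℝ) (k : ℤ) (x : ℝ) :
    mode (2 * Real.pi / T) k x = fourier k (x : AddCircle T) := by
  rw [mode, fourier_coe_apply]
  congr 1
  simp only [derivSymbol, Complex.ofReal_div, Complex.ofReal_mul, Complex.ofReal_ofNat]
  ring

theorem mode_left_eq_mode_right (a b : ℝ) (k : ℤ) :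
    mode (2 * Real.pi / (b - a)) k a = mode (2 * Real.pi / (b - a)) k b := by
  rw [mode_eq_fourier, mode_eq_fourier, ← AddCircle.coe_add_period (b - a) a, add_sub_cancel]

theorem fourierSeries_left_eq_right (a b : ℝ) (c : ℤ → ℂ) :
    fourierSeries (2 * Real.pi / (b - a)) c a = fourierSeries (2 * Real.pi / (b - a)) c b :=
  tsum_congr fun k => by rw [mode_left_eq_mode_right]

section Series

variable {ω : ℝ} {c : ℤ → ℂ}

theorem norm_mul_mode (c : ℂ) (ω : ℝ) (k : ℤ) (x : ℝ) : ‖c * mode ω k x‖ = ‖c‖ := by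
  rw [norm_mul, norm_mode, mul_one]

theorem hasSum_fourierSeries (hc : Summable fun k => ‖c k‖) (ω x : ℝ) :
    HasSum (fun k => c k * mode ω k x) (fourierSeries ω c x) :=
  Summable.hasSum <| .of_norm <| by simpa only [norm_mul_mode] using hc

theorem hasDerivAt_fourierSeries (hc : Summable fun k => ‖c k‖)
    (hc' : Summable fun k => ‖derivSymbol ω k * c k‖) (x : ℝ) :
    HasDerivAt (fourierSeries ω c) (fourierSeries ω (fun k => derivSymbol ω k * c k) x) x := by
  refine hasDerivAt_tsum hc' (fun k y => ?_) (fun k y => (norm_mul_mode _ ω k y).le)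
    (hasSum_fourierSeries hc ω 0).summable x
  exact ((hasDerivAt_mode ω k y).const_mul (c k)).congr_deriv (by ring)

theorem fourierSeries_im_eq_zero (hc : IsHermitianSeq c) (ω x : ℝ) :
    (fourierSeries ω c x).im = 0 := by
  rw [← Complex.conj_eq_iff_im, fourierSeries, Complex.conj_tsum, ← (Equiv.neg ℤ).tsum_eq]
  refine tsum_congr fun k => ?_
  rw [Equiv.neg_apply, hc, mode_neg, map_mul, Complex.conj_conj, Complex.conj_conj]

theorem hasSum_selfConv_mul_mode (hc : Summable fun k => ‖c k‖) (ω x : ℝ) :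
    HasSum (fun k => selfConv c k * mode ω k x) (fourierSeries ω c x ^ 2) := by
  let term := fun k => c k * mode ω k x
  have hterm : Summable fun k => ‖term k‖ := by simpa only [term, norm_mul_mode] using hc
  let shear : ℤ × ℤ ≃ ℤ × ℤ :=
    ⟨fun p => (p.2, p.1 - p.2), fun p => (p.1 + p.2, p.1), fun p => by simp, fun p => by simp⟩
  have hprod : HasSum (fun p : ℤ × ℤ => term p.1 * term p.2) (fourierSeries ω c x ^ 2) := by
    rw [sq, fourierSeries, tsum_mul_tsum_of_summable_norm hterm hterm]
    exact (summable_mul_of_summable_norm hterm hterm).hasSum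
  have hsheared : HasSum (fun p : ℤ × ℤ => term p.2 * term (p.1 - p.2))
      (fourierSeries ω c x ^ 2) := shear.hasSum_iff.2 hprod
  have hfiber (k : ℤ) : ∑' j, term j * term (k - j) = selfConv c k * mode ω k x := by
    rw [selfConv, ← tsum_mul_right]
    refine tsum_congr fun j => ?_
    rw [← mode_mul_mode ω k x j]
    ring
  simpa only [hfiber] using
    hsheared.prod_fiberwise fun k => (hsheared.summable.prod_factor k).hasSum

end Series

/-! ### Fourier coefficients of periodic functions -/

section Coefficients

variable {a b : ℝ} {f f' : ℝ → ℂ}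

theorem fourierCoeffOn_deriv (hab : a < b) (hf : ContinuousOn f (Icc a b))
    (hf' : ContinuousOn f' (Icc a b)) (hderiv : ∀ x ∈ Ioo a b, HasDerivAt f (f' x) x)
    (hper : f a = f b) (k : ℤ) :
    fourierCoeffOn hab f' k =
      derivSymbol (2 * Real.pi / (b - a)) k * fourierCoeffOn hab f k := by
  have hint : IntervalIntegrable f' volume a b := hf'.intervalIntegrable_of_Icc hab.le
  rcases eq_or_ne k 0 with rfl | hk
  · have : ∫ x in a..b, f' x = 0 := by
      rw [intervalIntegral.integral_eq_sub_of_hasDerivAt_of_le hab.le hf hderiv hint, hper,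
        sub_self]
    simp [fourierCoeffOn_eq_integral, derivSymbol, this]
  · rw [← uIcc_of_le hab.le] at hf
    rw [← min_eq_left hab.le, ← max_eq_right hab.le] at hderiv
    rw [fourierCoeffOn_of_hasDerivAt_Ioo hab hk hf (by simpa [hab.le] using hderiv) hint, hper]
    have : (b - a : ℂ) ≠ 0 := by exact_mod_cast (sub_pos.2 hab).ne'
    have : (k : ℂ) ≠ 0 := by exact_mod_cast hk
    simp only [derivSymbol, Complex.ofReal_div, Complex.ofReal_mul, Complex.ofReal_sub,
      Complex.ofReal_ofNat]
    field_simp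
    simp

theorem norm_fourierCoeffOn_le (hab : a < b) {M : ℝ} (hM : ∀ x ∈ Icc a b, ‖f x‖ ≤ M) (k : ℤ) :
    ‖fourierCoeffOn hab f k‖ ≤ M := by
  have hpos := sub_pos.2 hab
  have hint : ‖∫ x in a..b, fourier (-k) (x : AddCircle (b - a)) • f x‖ ≤ M * |b - a| := by
    refine intervalIntegral.norm_integral_le_of_norm_le_const fun x hx => ?_
    rw [uIoc_of_le hab.le] at hx
    rw [norm_smul, fourier_apply, Circle.norm_coe, one_mul]
    exact hM x (Ioc_subset_Icc_self hx)
  rw [fourierCoeffOn_eq_integral, norm_smul, Real.norm_of_nonneg (by positivity), one_div,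
    inv_mul_le_iff₀ hpos, mul_comm]
  rwa [abs_of_pos hpos] at hint

theorem isHermitianSeq_fourierCoeffOn (hab : a < b) (f : ℝ → ℝ) :
    IsHermitianSeq (fourierCoeffOn hab fun x => (f x : ℂ)) := fun k => by
  rw [fourierCoeffOn_eq_integral, fourierCoeffOn_eq_integral,
    intervalIntegral.integral_of_le hab.le, intervalIntegral.integral_of_le hab.le,
    Complex.real_smul, Complex.real_smul, map_mul, Complex.conj_ofReal, ← integral_conj]
  simp [-fourier_apply, fourier_neg, Complex.conj_ofReal]

theorem fourierSeries_fourierCoeffOn (hab : a < b) (hf : ContinuousOn f (Icc a b))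
    (hper : f a = f b) (hsum : Summable (fourierCoeffOn hab f)) {x : ℝ} (hx : x ∈ Icc a b) :
    fourierSeries (2 * Real.pi / (b - a)) (fourierCoeffOn hab f) x = f x := by
  have : Fact (0 < b - a) := ⟨sub_pos.2 hab⟩
  let g : C(AddCircle (b - a), ℂ) := ⟨AddCircle.liftIoc (b - a) a f,
    AddCircle.liftIoc_continuous (by rw [add_sub_cancel, hper]) (by rwa [add_sub_cancel])⟩
  have hIoc (y : ℝ) (hy : y ∈ Ioc a b) :
      fourierSeries (2 * Real.pi / (b - a)) (fourierCoeffOn hab f) y = f y := by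
    have hg : g y = f y := AddCircle.liftIoc_coe_apply (by rwa [add_sub_cancel])
    rw [← hg, ← (has_pointwise_sum_fourier_series_of_summable (f := g) hsum y).tsum_eq]
    exact tsum_congr fun k => by rw [mode_eq_fourier, smul_eq_mul]; rfl
  rcases hx.1.eq_or_lt with rfl | hax
  · rw [fourierSeries_left_eq_right, hper, hIoc b ⟨hab, le_rfl⟩]
  · exact hIoc x ⟨hax, hx.2⟩

end Coefficients

theorem exists_hasDecay_of_norm_derivSymbol_pow_mul_le {ω M : ℝ} {c : ℤ → ℂ} {n : ℕ} (hω : ω ≠ 0)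
    (hM : ∀ k, ‖derivSymbol ω k ^ n * c k‖ ≤ M) : ∃ B, HasDecay n B c := by
  have hM₀ : 0 ≤ M := (norm_nonneg _).trans (hM 0)
  refine ⟨‖c 0‖ + (2 / |ω|) ^ n * M, fun k => ?_⟩
  rw [le_div_iff₀' (pow_pos (modeWeight_pos k) n)]
  rcases eq_or_ne k 0 with rfl | hk
  · simpa [modeWeight] using mul_nonneg (by positivity) hM₀
  · have hωpos := abs_pos.2 hω
    have hweight : modeWeight k ≤ 2 / |ω| * ‖derivSymbol ω k‖ := by
      have : (1 : ℝ) ≤ |(k : ℝ)| := by exact_mod_cast Int.one_le_abs hk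
      have hnorm : ‖derivSymbol ω k‖ = |ω| * |(k : ℝ)| := by simp [derivSymbol]
      rw [hnorm, div_mul_eq_mul_div, mul_left_comm, mul_div_cancel_left₀ _ hωpos.ne', modeWeight]
      linarith
    calc modeWeight k ^ n * ‖c k‖ ≤ (2 / |ω| * ‖derivSymbol ω k‖) ^ n * ‖c k‖ :=
          mul_le_mul_of_nonneg_right (pow_le_pow_left₀ (modeWeight_pos k).le hweight n)
            (norm_nonneg _)
      _ = (2 / |ω|) ^ n * ‖derivSymbol ω k ^ n * c k‖ := by
          rw [norm_mul, norm_pow, mul_pow, mul_assoc]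
      _ ≤ (2 / |ω|) ^ n * M := mul_le_mul_of_nonneg_left (hM k) (by positivity)
      _ ≤ ‖c 0‖ + (2 / |ω|) ^ n * M := le_add_of_nonneg_left (norm_nonneg _)

section ContDiff

variable {a b : ℝ} {f : ℝ → ℝ} {n : ℕ}

theorem fourierCoeffOn_iteratedDerivWithin (hab : a < b) (hf : ContDiffOn ℝ n f (Icc a b))
    (hbc : ∀ j < n, iteratedDerivWithin j f (Icc a b) a = iteratedDerivWithin j f (Icc a b) b)
    (k : ℤ) :
    fourierCoeffOn hab (fun x => ((iteratedDerivWithin n f (Icc a b) x : ℝ) : ℂ)) k =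
      derivSymbol (2 * Real.pi / (b - a)) k ^ n * fourierCoeffOn hab (fun x => (f x : ℂ)) k := by
  induction n with
  | zero => simp
  | succ n ih =>
    have hcont {j : ℕ} (hj : j ≤ n + 1) :
        ContinuousOn (fun x => ((iteratedDerivWithin j f (Icc a b) x : ℝ) : ℂ)) (Icc a b) :=
      Complex.continuous_ofReal.comp_continuousOn <|
        hf.continuousOn_iteratedDerivWithin (by exact_mod_cast hj) (uniqueDiffOn_Icc hab)
    rw [fourierCoeffOn_deriv hab (hcont n.le_succ) (hcont le_rfl) (fun x hx => ?_)
        (by exact_mod_cast hbc n n.lt_succ_self),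
      ih (hf.of_le (by exact_mod_cast n.le_succ)) fun j hj => hbc j (hj.trans n.lt_succ_self),
      ← mul_assoc, ← pow_succ']
    have hdiff := hf.differentiableOn_iteratedDerivWithin (m := n)
      (by exact_mod_cast n.lt_succ_self) (uniqueDiffOn_Icc hab) x (Ioo_subset_Icc_self hx)
    rw [iteratedDerivWithin_succ]
    exact (hdiff.hasDerivWithinAt.hasDerivAt (Icc_mem_nhds hx.1 hx.2)).ofReal_comp

theorem exists_hasDecay_fourierCoeffOn (hab : a < b) (hf : ContDiffOn ℝ n f (Icc a b))
    (hbc : ∀ j < n, iteratedDerivWithin j f (Icc a b) a = iteratedDerivWithin j f (Icc a b) b) :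
    ∃ B, HasDecay n B (fourierCoeffOn hab fun x => (f x : ℂ)) := by
  obtain ⟨M, hM⟩ := isCompact_Icc.exists_bound_of_continuousOn
    (hf.continuousOn_iteratedDerivWithin le_rfl (uniqueDiffOn_Icc hab))
  have hω : 2 * Real.pi / (b - a) ≠ 0 := div_ne_zero Real.two_pi_pos.ne' (sub_pos.2 hab).ne'
  refine exists_hasDecay_of_norm_derivSymbol_pow_mul_le (M := M) hω fun k => ?_
  rw [← fourierCoeffOn_iteratedDerivWithin hab hf hbc]
  exact norm_fourierCoeffOn_le hab (fun x hx => by simpa using hM x hx) k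

end ContDiff

/-! ### From mild to classical solutions -/

section TimeDependentSeries

variable {m n : ℕ} {c c' : ℝ → ℤ → ℂ}

theorem continuousOn_fourierSeries (hn : 2 ≤ n) (hc : ∀ k, ContinuousOn (fun t => c t k) (Ici 0))
    (hdecay : ∀ τ, ∃ B, ∀ t ∈ Icc 0 τ, HasDecay n B (c t)) (ω : ℝ) :
    ContinuousOn (fun p : ℝ × ℝ => fourierSeries ω (c p.1) p.2) (Ici 0 ×ˢ univ) := by
  refine continuousOn_tsum_of_locally_bounded (fun k => ?_) fun p _ => ?_
  · exact ((hc k).comp continuousOn_fst fun p hp => hp.1).mul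
      ((continuous_mode ω k).comp continuous_snd).continuousOn
  · obtain ⟨B, hB⟩ := hdecay (p.1 + 1)
    refine ⟨_, isOpen_Iio.preimage continuous_fst, lt_add_one p.1, _,
      (summable_one_div_modeWeight_pow hn).mul_left B, fun k q hq => ?_⟩
    rw [norm_mul_mode, mul_one_div]
    exact hB q.1 ⟨hq.1.1, le_of_lt hq.2⟩ k

theorem hasDerivWithinAt_fourierSeries (hm : 2 ≤ m) (hn : 2 ≤ n)
    (hderiv : ∀ k, ∀ t ∈ Ici 0, HasDerivWithinAt (fun t => c t k) (c' t k) (Ici 0) t)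
    (hc' : ∀ k, ContinuousOn (fun t => c' t k) (Ici 0))
    (hdecay : ∀ τ, ∃ B, ∀ t ∈ Icc 0 τ, HasDecay m B (c t))
    (hdecay' : ∀ τ, ∃ B, ∀ t ∈ Icc 0 τ, HasDecay n B (c' t)) (ω x : ℝ) {t : ℝ}
    (ht : t ∈ Ici 0) :
    HasDerivWithinAt (fun t => fourierSeries ω (c t) x) (fourierSeries ω (c' t) x) (Ici 0) t := by
  have hslice : MapsTo (fun t : ℝ => (t, x)) (Ici 0) (Ici 0 ×ˢ univ) := fun t ht => ⟨ht, trivial⟩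
  have hc : ∀ k, ContinuousOn (fun t => c t k) (Ici 0) :=
    fun k t ht => (hderiv k t ht).continuousWithinAt
  refine hasDerivWithinAt_Ici_of_continuousOn (f' := fun t => fourierSeries ω (c' t) x)
    ((continuousOn_fourierSeries hm hc hdecay ω).comp (by fun_prop) hslice)
    ((continuousOn_fourierSeries hn hc' hdecay' ω).comp (by fun_prop) hslice) (fun τ hτ => ?_) ht
  obtain ⟨B, hB⟩ := hdecay τ
  obtain ⟨B', hB'⟩ := hdecay' (τ + 1)
  have hmem : τ ∈ Ioo 0 (τ + 1) := ⟨hτ, lt_add_one τ⟩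
  have hsum := hasSum_fourierSeries ((hB τ ⟨hmem.1.le, le_rfl⟩).summable_norm hm) ω x
  refine hasDerivAt_tsum_of_isPreconnected (g := fun k t => c t k * mode ω k x)
    (g' := fun k t => c' t k * mode ω k x) ((summable_one_div_modeWeight_pow hn).mul_left B')
    isOpen_Ioo isPreconnected_Ioo (fun k r hr => ?_) (fun k r hr => ?_) hmem hsum.summable hmem
  · exact ((hderiv k r hr.1.le).hasDerivAt (Ici_mem_nhds hr.1)).mul_const _
  · rw [norm_mul_mode, mul_one_div]
    exact hB' r ⟨hr.1.le, hr.2.le⟩ k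

end TimeDependentSeries

theorem HasDecay.derivSymbol_pow_mul {n j : ℕ} {B : ℝ} {c : ℤ → ℂ} (hc : HasDecay (n + j) B c)
    (ω : ℝ) : HasDecay n (|ω| ^ j * B) (fun k => derivSymbol ω k ^ j * c k) :=
  hc.mul_of_norm_le fun k => by
    rw [norm_pow, ← mul_pow]
    exact pow_le_pow_left₀ (norm_nonneg _) (norm_derivSymbol_le ω k) j

theorem fourierSeries_ksField {B : ℝ} {c : ℤ → ℂ} (hc : HasDecay 6 B c) (ω x : ℝ) :
    fourierSeries ω (ksField ω c) x =
      -3 * fourierSeries ω (fun k => derivSymbol ω k ^ 4 * c k) x -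
        fourierSeries ω (fun k => derivSymbol ω k ^ 2 * c k) x -
        1 / 2 * fourierSeries ω (fun k => derivSymbol ω k * c k) x ^ 2 := by
  have hderiv (j : ℕ) (hj : j ≤ 4) := hasSum_fourierSeries
    ((hc.of_le (Nat.add_le_add_left hj 2)).derivSymbol_pow_mul ω |>.summable_norm le_rfl) ω x
  have hsq := hasSum_selfConv_mul_mode ((hc.derivSymbol_mul ω).summable_norm (by norm_num)) ω x
  have hsum := (((hderiv 4 le_rfl).mul_left (-3)).sub (hderiv 2 (by norm_num))).sub
    (hsq.mul_left (1 / 2))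
  rw [← hsum.tsum_eq]
  refine tsum_congr fun k => ?_
  rw [ksField, ksNonlinearity, ofReal_linearSymbol]
  ring

theorem fourierSeries_neg_half_eq_half (L : ℝ) (c : ℤ → ℂ) :
    fourierSeries (2 * Real.pi / L) c (-(L / 2)) = fourierSeries (2 * Real.pi / L) c (L / 2) := by
  have := fourierSeries_left_eq_right (-(L / 2)) (L / 2) c
  rwa [sub_neg_eq_add, add_halves] at this

namespace IsMildSolution

variable {ω A : ℝ} {a₀ : ℤ → ℂ} {a : ℝ → ℤ → ℂ}

theorem exists_hasDecay_derivSymbol_pow_mul (ha : IsMildSolution ω a₀ a) (hω : ω ≠ 0)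
    (ha₀ : HasDecay 6 A a₀) {j : ℕ} (hj : j ≤ 4) (τ : ℝ) :
    ∃ B, ∀ t ∈ Icc 0 τ, HasDecay 2 B (fun k => derivSymbol ω k ^ j * a t k) := by
  obtain ⟨B, hB⟩ := ha.exists_hasDecay_six hω ha₀ τ
  exact ⟨_, fun t ht => ((hB t ht).of_le (Nat.add_le_add_left hj 2)).derivSymbol_pow_mul ω⟩

theorem hasDerivAt_fourierSeries_derivSymbol_pow_mul (ha : IsMildSolution ω a₀ a) (hω : ω ≠ 0)
    (ha₀ : HasDecay 6 A a₀) {j : ℕ} (hj : j < 4) {t : ℝ} (ht : t ∈ Ici 0) (x : ℝ) :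
    HasDerivAt (fourierSeries ω fun k => derivSymbol ω k ^ j * a t k)
      (fourierSeries ω (fun k => derivSymbol ω k ^ (j + 1) * a t k) x) x := by
  have hsum {i : ℕ} (hi : i ≤ 4) : Summable fun k => ‖derivSymbol ω k ^ i * a t k‖ := by
    obtain ⟨B, hB⟩ := ha.exists_hasDecay_derivSymbol_pow_mul hω ha₀ hi t
    exact (hB t ⟨ht, le_rfl⟩).summable_norm le_rfl
  have hsum' := hsum (i := j + 1) hj
  simp only [pow_succ', mul_assoc] at hsum' ⊢
  exact hasDerivAt_fourierSeries (hsum hj.le) hsum' x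

theorem re_fourierSeries_ksField (ha : IsMildSolution ω a₀ a) (hω : ω ≠ 0)
    (ha₀ : HasDecay 6 A a₀) {t : ℝ} (ht : t ∈ Ici 0) (x : ℝ) :
    (fourierSeries ω (ksField ω (a t)) x).re =
      -3 * (fourierSeries ω (fun k => derivSymbol ω k ^ 4 * a t k) x).re -
        (fourierSeries ω (fun k => derivSymbol ω k ^ 2 * a t k) x).re -
        1 / 2 * (fourierSeries ω (fun k => derivSymbol ω k ^ 1 * a t k) x).re ^ 2 := by
  obtain ⟨B, hB⟩ := ha.exists_hasDecay_six hω ha₀ t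
  have hreal := fourierSeries_im_eq_zero ((ha.isHermitianSeq t ht).derivSymbol_mul ω) ω x
  rw [fourierSeries_ksField (hB t ⟨ht, le_rfl⟩)]
  simp only [pow_one]
  simp [sq, hreal]

theorem isKSSolution {ℓ₀ : ℝ} {Φ₀ : ℝ → ℝ} (ha : IsMildSolution (2 * Real.pi / ℓ₀) a₀ a)
    (hℓ₀ : 0 < ℓ₀) (ha₀ : HasDecay 6 A a₀)
    (hΦ₀ : ∀ η ∈ Iℓ ℓ₀, fourierSeries (2 * Real.pi / ℓ₀) a₀ η = Φ₀ η) :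
    IsKSSolution ℓ₀ Φ₀ fun t η => (fourierSeries (2 * Real.pi / ℓ₀) (a t) η).re := by
  have hends := fourierSeries_neg_half_eq_half ℓ₀
  have hω : 2 * Real.pi / ℓ₀ ≠ 0 := div_ne_zero Real.two_pi_pos.ne' hℓ₀.ne'
  set ω := 2 * Real.pi / ℓ₀
  have hdecay {j : ℕ} (hj : j ≤ 4) := ha.exists_hasDecay_derivSymbol_pow_mul hω ha₀ hj
  have hfield := ha.exists_hasDecay_ksField hω ha₀
  have hsub : Ici (0 : ℝ) ×ˢ Iℓ ℓ₀ ⊆ Ici 0 ×ˢ univ := prod_mono_right (subset_univ _)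
  refine ⟨fun t η => (fourierSeries ω (ksField ω (a t)) η).re,
    fun j t η => (fourierSeries ω (fun k => derivSymbol ω k ^ j * a t k) η).re,
    by simp only [pow_zero, one_mul], fun t ht η _ => ?_, fun j hj t ht η _ => ?_, ?_,
    fun j hj => ?_, fun t ht η _ => ha.re_fourierSeries_ksField hω ha₀ ht η,
    fun t _ j _ => congrArg _ (hends _), fun η hη => ?_⟩
  · exact Complex.reCLM.hasFDerivAt.comp_hasDerivWithinAt t <|
      hasDerivWithinAt_fourierSeries (m := 6) (n := 2) (by norm_num) le_rfl
        (fun k t ht => ha.hasDerivWithinAt k ht) ha.continuousOn_ksField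
        (ha.exists_hasDecay_six hω ha₀) hfield ω η ht
  · exact (Complex.reCLM.hasFDerivAt.comp_hasDerivAt η <|
      ha.hasDerivAt_fourierSeries_derivSymbol_pow_mul hω ha₀ hj ht η).hasDerivWithinAt
  · exact Complex.continuous_re.comp_continuousOn <|
      (continuousOn_fourierSeries le_rfl ha.continuousOn_ksField hfield ω).mono hsub
  · exact Complex.continuous_re.comp_continuousOn <| (continuousOn_fourierSeries le_rfl
      (fun k => continuousOn_const.mul (ha.continuousOn k)) (hdecay hj) ω).mono hsub
  · simp only [ha.initial, hΦ₀ η hη, Complex.ofReal_re]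

end IsMildSolution

theorem exists_isKSSolution {ℓ₀ : ℝ} {Φ₀ : ℝ → ℝ} (hℓ₀ : 0 < ℓ₀)
    (hreg : ContDiffOn ℝ 6 Φ₀ (Iℓ ℓ₀))
    (hbc : ∀ k < 6, iteratedDerivWithin k Φ₀ (Iℓ ℓ₀) (-(ℓ₀ / 2)) =
      iteratedDerivWithin k Φ₀ (Iℓ ℓ₀) (ℓ₀ / 2)) :
    ∃ Φ, IsKSSolution ℓ₀ Φ₀ Φ := by
  have hab : -(ℓ₀ / 2) < ℓ₀ / 2 := by linarith
  have hω : 2 * Real.pi / ℓ₀ ≠ 0 := div_ne_zero Real.two_pi_pos.ne' hℓ₀.ne'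
  obtain ⟨A, hdecay⟩ := exists_hasDecay_fourierCoeffOn hab hreg hbc
  obtain ⟨a, ha⟩ := exists_isMildSolution hω (hdecay.of_le (by norm_num))
    (isHermitianSeq_fourierCoeffOn hab Φ₀)
  refine ⟨_, ha.isKSSolution hℓ₀ hdecay fun η hη => ?_⟩
  have hseries := fourierSeries_fourierCoeffOn hab
    (Complex.continuous_ofReal.comp_continuousOn hreg.continuousOn)
    (by simpa using hbc 0 (by norm_num))
    (.of_norm (hdecay.summable_norm (by norm_num))) hη
  rwa [sub_neg_eq_add, add_halves] at hseries

end KS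

theorem KS_global_wellposedness_general {ℓ₀ : ℝ} (hℓ₀ : 0 < ℓ₀) {Φ₀ : ℝ → ℝ}
    (hreg : ContDiffOn ℝ 6 Φ₀ (Iℓ ℓ₀))
    (hbc : ∀ k < 6, iteratedDerivWithin k Φ₀ (Iℓ ℓ₀) (-(ℓ₀ / 2)) =
      iteratedDerivWithin k Φ₀ (Iℓ ℓ₀) (ℓ₀ / 2)) :
    ∃ Φ : ℝ → ℝ → ℝ, IsKSSolution ℓ₀ Φ₀ Φ ∧
      ∀ Ψ : ℝ → ℝ → ℝ, IsKSSolution ℓ₀ Φ₀ Ψ →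
        ∀ τ ∈ Ici (0 : ℝ), ∀ η ∈ Iℓ ℓ₀, Ψ τ η = Φ τ η := by
  obtain ⟨Φ, hΦ⟩ := KS.exists_isKSSolution hℓ₀ hreg hbc
  exact ⟨Φ, hΦ, fun Ψ hΨ => KS.isKSSolution_unique hℓ₀ hΦ hΨ⟩

/-- Theorem 4.2: global well-posedness of the Kuramoto–Sivashinsky
equation with `ℓ₀`-periodic boundary conditions: for `Φ₀ ∈ C^{6+α}` with periodic
derivatives up to order `6`, there is a unique `C^{1,4}` solution on
`[0,∞) × [−ℓ₀/2, ℓ₀/2]`. -/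
theorem KS_global_wellposedness (ℓ₀ α : ℝ) (hℓ₀ : 0 < ℓ₀)
    (hα : α ∈ Set.Ioo (0 : ℝ) (1 / 2)) (Φ₀ : ℝ → ℝ)
    (hreg : ContDiffOn ℝ 6 Φ₀ (Iℓ ℓ₀))
    (hhold : ∃ C : NNReal,
      HolderOnWith C ⟨α, hα.1.le⟩ (iteratedDerivWithin 6 Φ₀ (Iℓ ℓ₀)) (Iℓ ℓ₀))
    (hbc : ∀ k ≤ 6, iteratedDerivWithin k Φ₀ (Iℓ ℓ₀) (-(ℓ₀ / 2)) =
      iteratedDerivWithin k Φ₀ (Iℓ ℓ₀) (ℓ₀ / 2)) :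
    ∃ Φ : ℝ → ℝ → ℝ, IsKSSolution ℓ₀ Φ₀ Φ ∧
      ∀ Ψ : ℝ → ℝ → ℝ, IsKSSolution ℓ₀ Φ₀ Ψ →
        ∀ τ ∈ Ici (0 : ℝ), ∀ η ∈ Iℓ ℓ₀, Ψ τ η = Φ τ η := by
  exact KS_global_wellposedness_general hℓ₀ hreg fun k hk => hbc k hk.le
end

section
/- Fix ℓ₀ > 0, T ∈ (0, ∞], and let Φ : [0, T) × [−ℓ₀/2, ℓ₀/2] → ℝ be a C^{1,4} solution of the Kuramoto–Sivashinsky equation Φ_τ = −3Φ_ηηηη − Φ_ηη − (1/2)(Φ_η)² satisfying the periodic boundary conditions D_η^{(k)}Φ(τ,−ℓ₀/2) = D_η^{(k)}Φ(τ,ℓ₀/2) for k = 0,1,2,3 and Φ(0,·) = Φ₀. Then for every τ ∈ [0, T), ‖Φ_η(τ,·)‖₂ ≤ e^{13τ/6}·‖Φ₀'‖₂, where ‖f‖₂² = ∫_{−ℓ₀/2}^{ℓ₀/2} f(η)² dη. -/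
open Set

/-- The time interval `[0, T)`, where `T ∈ (0, ∞]` is an extended real number. -/
def ksDom (T : EReal) : Set ℝ := {τ : ℝ | 0 ≤ τ ∧ (τ : EReal) < T}

/-- `Φ : [0,T) × [−ℓ₀/2, ℓ₀/2] → ℝ` is a `C^{1,4}` solution of the Kuramoto–Sivashinsky
equation `Φ_τ = −3Φ_ηηηη − Φ_ηη − (1/2)(Φ_η)²` with `ℓ₀`-periodic boundary conditions;
`Φτ` is the time derivative and `D j` the `j`-th spatial derivative (`D 0 = Φ`), all
jointly continuous on the domain. -/
def IsKSSolutionOn (ℓ₀ : ℝ) (T : EReal) (Φ Φτ : ℝ → ℝ → ℝ) (D : ℕ → ℝ → ℝ → ℝ) : Prop :=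
  D 0 = Φ ∧
  (∀ τ ∈ ksDom T, ∀ η ∈ Iℓ ℓ₀,
    HasDerivWithinAt (fun t => Φ t η) (Φτ τ η) (ksDom T) τ) ∧
  (∀ j < 4, ∀ τ ∈ ksDom T, ∀ η ∈ Iℓ ℓ₀,
    HasDerivWithinAt (fun y => D j τ y) (D (j + 1) τ η) (Iℓ ℓ₀) η) ∧
  ContinuousOn (fun p : ℝ × ℝ => Φτ p.1 p.2) (ksDom T ×ˢ Iℓ ℓ₀) ∧
  (∀ j ≤ 4, ContinuousOn (fun p : ℝ × ℝ => D j p.1 p.2) (ksDom T ×ˢ Iℓ ℓ₀)) ∧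
  (∀ τ ∈ ksDom T, ∀ η ∈ Iℓ ℓ₀,
    Φτ τ η = -3 * D 4 τ η - D 2 τ η - 1 / 2 * (D 1 τ η) ^ 2) ∧
  (∀ τ ∈ ksDom T, ∀ j ≤ 3, D j τ (-(ℓ₀ / 2)) = D j τ (ℓ₀ / 2))

/-!
Testing the equation against `-2Φ_ηη` and integrating by parts, the nonlinear term integrates to
zero and the energy `E = ∫ Φ_η²` satisfies
`E' = -6 ∫ Φ_ηηη² - 2 ∫ Φ_ηηη Φ_η ≤ E / 6`
by completing the square, so Grönwall's inequality gives `√E(τ) ≤ exp(τ / 12) √E(0)`.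

A `C^{1,4}` function need not have a mixed derivative `Φ_ητ`, so `E` cannot be differentiated under
the integral sign. Instead, one integrates by parts in `E(t) - E(s)` to move the spatial derivative
off the increment `Φ(t,·) - Φ(s,·)`, and only then lets `t → s`.
-/

open Filter Topology Interval Function

section IntegrationByParts

variable {a b : ℝ} {u u' v v' : ℝ → ℝ}

lemma integral_mul_deriv_eq_neg_of_endpoints_eq
    (hu : ∀ x ∈ [[a, b]], HasDerivWithinAt u (u' x) [[a, b]] x)
    (hv : ∀ x ∈ [[a, b]], HasDerivWithinAt v (v' x) [[a, b]] x)
    (hu' : ContinuousOn u' [[a, b]]) (hv' : ContinuousOn v' [[a, b]])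
    (hu_ends : u a = u b) (hv_ends : v a = v b) :
    ∫ x in a..b, u x * v' x = -∫ x in a..b, u' x * v x := by
  rw [intervalIntegral.integral_mul_deriv_eq_deriv_mul_of_hasDerivWithinAt hu hv
    hu'.intervalIntegrable hv'.intervalIntegrable, hu_ends, hv_ends, sub_self, zero_sub]

lemma integral_comp_mul_deriv_eq_zero_of_endpoints_eq {g : ℝ → ℝ}
    (hu : ∀ x ∈ [[a, b]], HasDerivWithinAt u (u' x) [[a, b]] x)
    (hu' : ContinuousOn u' [[a, b]]) (hg : ContinuousOn g (u '' [[a, b]]))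
    (hu_ends : u a = u b) : ∫ x in a..b, g (u x) * u' x = 0 := by
  have hright : ∀ x ∈ Ioo (min a b) (max a b), HasDerivWithinAt u (u' x) (Ioi x) x := fun x hx =>
    ((hu x (Ioo_subset_Icc_self hx)).hasDerivAt (Icc_mem_nhds hx.1 hx.2)).hasDerivWithinAt
  simpa only [comp_apply, hu_ends, intervalIntegral.integral_same] using
    intervalIntegral.integral_comp_mul_deriv'' (HasDerivWithinAt.continuousOn hu) hright hu' hg

lemma integral_sq_deriv_sub_integral_sq_deriv {F G : ℝ → ℝ}
    (hF : ∀ x ∈ [[a, b]], HasDerivWithinAt F (u x) [[a, b]] x)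
    (hG : ∀ x ∈ [[a, b]], HasDerivWithinAt G (v x) [[a, b]] x)
    (hu : ∀ x ∈ [[a, b]], HasDerivWithinAt u (u' x) [[a, b]] x)
    (hv : ∀ x ∈ [[a, b]], HasDerivWithinAt v (v' x) [[a, b]] x)
    (hu' : ContinuousOn u' [[a, b]]) (hv' : ContinuousOn v' [[a, b]])
    (hF_ends : F a = F b) (hG_ends : G a = G b) (hu_ends : u a = u b) (hv_ends : v a = v b) :
    (∫ x in a..b, u x ^ 2) - ∫ x in a..b, v x ^ 2 =
      ∫ x in a..b, (F x - G x) * -(u' x + v' x) := by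
  have hu_cont : ContinuousOn u [[a, b]] := HasDerivWithinAt.continuousOn hu
  have hv_cont : ContinuousOn v [[a, b]] := HasDerivWithinAt.continuousOn hv
  have hparts : ∫ x in a..b, (F x - G x) * (u' x + v' x) =
      -∫ x in a..b, (u x - v x) * (u x + v x) :=
    integral_mul_deriv_eq_neg_of_endpoints_eq
      (fun x hx => (hF x hx).sub (hG x hx)) (fun x hx => (hu x hx).add (hv x hx))
      (hu_cont.sub hv_cont) (hu'.add hv')
      (by rw [hF_ends, hG_ends]) (by rw [hu_ends, hv_ends])
  calc (∫ x in a..b, u x ^ 2) - ∫ x in a..b, v x ^ 2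
      = ∫ x in a..b, (u x - v x) * (u x + v x) := by
        rw [← intervalIntegral.integral_sub (ContinuousOn.intervalIntegrable (by fun_prop))
          (ContinuousOn.intervalIntegrable (by fun_prop))]
        exact intervalIntegral.integral_congr fun x _ => by ring
    _ = ∫ x in a..b, (F x - G x) * -(u' x + v' x) := by
        simp only [mul_neg, intervalIntegral.integral_neg, hparts, neg_neg]

end IntegrationByParts

section EnergyDerivative

variable {a b s : ℝ} {K : Set ℝ} {F F' : ℝ → ℝ → ℝ}

lemma norm_slope_le_of_norm_hasDerivWithinAt_le {f f' : ℝ → ℝ} {C t : ℝ} (hK : Convex ℝ K)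
    (hf : ∀ x ∈ K, HasDerivWithinAt f (f' x) K x) (hC : ∀ x ∈ K, ‖f' x‖ ≤ C)
    (hs : s ∈ K) (ht : t ∈ K) (hts : t ≠ s) : ‖slope f s t‖ ≤ C := by
  rw [slope_def_field, norm_div, div_le_iff₀ (norm_pos_iff.2 (sub_ne_zero.2 hts))]
  exact hK.norm_image_sub_le_of_norm_hasDerivWithin_le hf hC hs ht

lemma tendsto_integral_slope_mul {W : ℝ → ℝ → ℝ} (hK : IsCompact K) (hK_conv : Convex ℝ K)
    (hF_cont : ∀ t ∈ K, ContinuousOn (F t) [[a, b]])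
    (hF : ∀ t ∈ K, ∀ x ∈ [[a, b]], HasDerivWithinAt (F · x) (F' t x) K t)
    (hF' : ContinuousOn (uncurry F') (K ×ˢ [[a, b]]))
    (hW : ContinuousOn (uncurry W) (K ×ˢ [[a, b]])) (hs : s ∈ K) :
    Tendsto (fun t => ∫ x in a..b, slope (F · x) s t * W t x) (𝓝[K \ {s}] s)
      (𝓝 (∫ x in a..b, F' s x * W s x)) := by
  obtain ⟨M, hM⟩ := (hK.prod isCompact_uIcc).exists_bound_of_continuousOn hF'
  obtain ⟨N, hN⟩ := (hK.prod isCompact_uIcc).exists_bound_of_continuousOn hW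
  have hmem : ∀ᶠ t in 𝓝[K \ {s}] s, t ∈ K \ {s} := self_mem_nhdsWithin
  refine intervalIntegral.tendsto_integral_filter_of_dominated_convergence (fun _ => M * N)
    ?measurable ?bound intervalIntegrable_const ?limit
  case measurable =>
    filter_upwards [hmem] with t ht
    have hFt := hF_cont t ht.1
    have hFs := hF_cont s hs
    have hWt : ContinuousOn (W t) [[a, b]] := hW.uncurry_left t ht.1
    have hcont : ContinuousOn (fun x => slope (F · x) s t * W t x) [[a, b]] := by
      simp only [slope_def_field]
      fun_prop
    exact (hcont.mono uIoc_subset_uIcc).aestronglyMeasurable measurableSet_uIoc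
  case bound =>
    filter_upwards [hmem] with t ht
    refine Eventually.of_forall fun x hx => ?_
    replace hx := uIoc_subset_uIcc hx
    have hslope : ‖slope (F · x) s t‖ ≤ M :=
      norm_slope_le_of_norm_hasDerivWithinAt_le hK_conv (fun r hr => hF r hr x hx)
        (fun r hr => hM (r, x) ⟨hr, hx⟩) hs ht.1 ht.2
    exact norm_mul_le_of_le hslope (hN (t, x) ⟨ht.1, hx⟩)
  case limit =>
    refine Eventually.of_forall fun x hx => ?_
    replace hx := uIoc_subset_uIcc hx
    have hWx : ContinuousOn (W · x) K := hW.uncurry_right x hx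
    exact (hasDerivWithinAt_iff_tendsto_slope.1 (hF s hs x hx)).mul
      ((hWx s hs).mono sdiff_subset).tendsto

lemma hasDerivWithinAt_integral_sq_deriv {U V : ℝ → ℝ → ℝ}
    (hK : IsCompact K) (hK_conv : Convex ℝ K)
    (hF : ∀ t ∈ K, ∀ x ∈ [[a, b]], HasDerivWithinAt (F · x) (F' t x) K t)
    (hF' : ContinuousOn (uncurry F') (K ×ˢ [[a, b]]))
    (hU : ∀ t ∈ K, ∀ x ∈ [[a, b]], HasDerivWithinAt (F t) (U t x) [[a, b]] x)
    (hV : ∀ t ∈ K, ∀ x ∈ [[a, b]], HasDerivWithinAt (U t) (V t x) [[a, b]] x)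
    (hV_cont : ContinuousOn (uncurry V) (K ×ˢ [[a, b]]))
    (hF_ends : ∀ t ∈ K, F t a = F t b) (hU_ends : ∀ t ∈ K, U t a = U t b) (hs : s ∈ K) :
    HasDerivWithinAt (fun t => ∫ x in a..b, U t x ^ 2)
      (-2 * ∫ x in a..b, F' s x * V s x) K s := by
  have hVt : ∀ t ∈ K, ContinuousOn (V t) [[a, b]] := fun t ht => hV_cont.uncurry_left t ht
  have hslope : ∀ t ∈ K \ {s}, ∫ x in a..b, slope (F · x) s t * -(V t x + V s x) =
      slope (fun t => ∫ x in a..b, U t x ^ 2) s t := by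
    rintro t ⟨ht, -⟩
    rw [slope_def_field, integral_sq_deriv_sub_integral_sq_deriv (hU t ht) (hU s hs) (hV t ht)
      (hV s hs) (hVt t ht) (hVt s hs) (hF_ends t ht) (hF_ends s hs) (hU_ends t ht) (hU_ends s hs),
      ← intervalIntegral.integral_div]
    simp only [slope_def_field, div_mul_eq_mul_div]
  have hW : ContinuousOn (uncurry fun t x => -(V t x + V s x)) (K ×ˢ [[a, b]]) :=
    (hV_cont.add ((hVt s hs).comp continuousOn_snd fun _ hp => hp.2)).neg
  have hlim : ∫ x in a..b, F' s x * -(V s x + V s x) = -2 * ∫ x in a..b, F' s x * V s x := by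
    rw [← intervalIntegral.integral_const_mul]
    exact intervalIntegral.integral_congr fun x _ => by ring
  rw [hasDerivWithinAt_iff_tendsto_slope, ← hlim]
  exact (tendsto_integral_slope_mul hK hK_conv
    (fun t ht => HasDerivWithinAt.continuousOn (hU t ht)) hF hF' hW hs).congr'
      (eventually_mem_nhdsWithin.mono hslope)

end EnergyDerivative

section EnergyDissipation

variable {a b α : ℝ} {v v₁ v₂ v₃ g : ℝ → ℝ}

lemma neg_two_mul_integral_fourth_order_mul_deriv_eq (β : ℝ)
    (hv : ∀ x ∈ [[a, b]], HasDerivWithinAt v (v₁ x) [[a, b]] x)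
    (hv₁ : ∀ x ∈ [[a, b]], HasDerivWithinAt v₁ (v₂ x) [[a, b]] x)
    (hv₂ : ∀ x ∈ [[a, b]], HasDerivWithinAt v₂ (v₃ x) [[a, b]] x)
    (hv₃ : ContinuousOn v₃ [[a, b]]) (hg : Continuous g)
    (hv_ends : v a = v b) (hv₁_ends : v₁ a = v₁ b) (hv₂_ends : v₂ a = v₂ b) :
    -2 * ∫ x in a..b, (-α * v₃ x - β * v₁ x + g (v x)) * v₁ x =
      ∫ x in a..b, (-2 * α * v₂ x ^ 2 - 2 * β * (v₂ x * v x)) := by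
  have hc : ContinuousOn v [[a, b]] := HasDerivWithinAt.continuousOn hv
  have hc₁ : ContinuousOn v₁ [[a, b]] := HasDerivWithinAt.continuousOn hv₁
  have hc₂ : ContinuousOn v₂ [[a, b]] := HasDerivWithinAt.continuousOn hv₂
  have hfourth : ∫ x in a..b, v₁ x * v₃ x = -∫ x in a..b, v₂ x * v₂ x :=
    integral_mul_deriv_eq_neg_of_endpoints_eq hv₁ hv₂ hc₂ hv₃ hv₁_ends hv₂_ends
  have hsecond : ∫ x in a..b, v₁ x * v₁ x = -∫ x in a..b, v₂ x * v x :=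
    integral_mul_deriv_eq_neg_of_endpoints_eq hv₁ hv hc₂ hc₁ hv₁_ends hv_ends
  have hnonlinear : ∫ x in a..b, g (v x) * v₁ x = 0 :=
    integral_comp_mul_deriv_eq_zero_of_endpoints_eq hv hc₁ hg.continuousOn hv_ends
  have hexpand : ∀ x, (-α * v₃ x - β * v₁ x + g (v x)) * v₁ x =
      -α * (v₁ x * v₃ x) - β * (v₁ x * v₁ x) + g (v x) * v₁ x := fun x => by ring
  simp_rw [hexpand, sq]
  rw [intervalIntegral.integral_add, intervalIntegral.integral_sub, intervalIntegral.integral_sub]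
  · simp only [intervalIntegral.integral_const_mul, hfourth, hsecond, hnonlinear]
    ring
  all_goals exact ContinuousOn.intervalIntegrable (by fun_prop)

lemma neg_two_mul_integral_fourth_order_mul_deriv_le (hab : a ≤ b) (hα : 0 < α) (β : ℝ)
    (hv : ∀ x ∈ [[a, b]], HasDerivWithinAt v (v₁ x) [[a, b]] x)
    (hv₁ : ∀ x ∈ [[a, b]], HasDerivWithinAt v₁ (v₂ x) [[a, b]] x)
    (hv₂ : ∀ x ∈ [[a, b]], HasDerivWithinAt v₂ (v₃ x) [[a, b]] x)
    (hv₃ : ContinuousOn v₃ [[a, b]]) (hg : Continuous g)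
    (hv_ends : v a = v b) (hv₁_ends : v₁ a = v₁ b) (hv₂_ends : v₂ a = v₂ b) :
    -2 * ∫ x in a..b, (-α * v₃ x - β * v₁ x + g (v x)) * v₁ x ≤
      β ^ 2 / (2 * α) * ∫ x in a..b, v x ^ 2 := by
  have hc : ContinuousOn v [[a, b]] := HasDerivWithinAt.continuousOn hv
  have hc₂ : ContinuousOn v₂ [[a, b]] := HasDerivWithinAt.continuousOn hv₂
  rw [neg_two_mul_integral_fourth_order_mul_deriv_eq β hv hv₁ hv₂ hv₃ hg hv_ends hv₁_ends hv₂_ends,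
    ← intervalIntegral.integral_const_mul]
  refine intervalIntegral.integral_mono_on hab (ContinuousOn.intervalIntegrable (by fun_prop))
    (ContinuousOn.intervalIntegrable (by fun_prop)) fun x _ => sub_nonneg.1 ?_
  have hsquare : β ^ 2 / (2 * α) * v x ^ 2 - (-2 * α * v₂ x ^ 2 - 2 * β * (v₂ x * v x)) =
      2 * α * (v₂ x + β / (2 * α) * v x) ^ 2 := by
    field_simp
    ring
  rw [hsquare]
  positivity

end EnergyDissipation

lemma le_mul_exp_of_hasDerivWithinAt_le {f f' : ℝ → ℝ} {a b k : ℝ} (hab : a ≤ b)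
    (hf : ∀ x ∈ Icc a b, HasDerivWithinAt f (f' x) (Icc a b) x)
    (hf' : ∀ x ∈ Icc a b, f' x ≤ k * f x) : f b ≤ f a * Real.exp (k * (b - a)) := by
  rw [← gronwallBound_ε0]
  refine le_gronwallBound_of_liminf_deriv_right_le (HasDerivWithinAt.continuousOn hf)
    (fun x hx r hr => ?_) le_rfl
    (fun x hx => (hf' x (Ico_subset_Icc_self hx)).trans_eq (add_zero _).symm) b
    (right_mem_Icc.2 hab)
  have hright : HasDerivWithinAt f (f' x) (Ici x) x :=
    (hf x (Ico_subset_Icc_self hx)).mono_of_mem_nhdsWithin (Icc_mem_nhdsGE_of_mem hx)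
  exact hright.liminf_right_slope_le hr

lemma Icc_subset_ksDom {T : EReal} {τ : ℝ} (hτ : τ ∈ ksDom T) : Icc 0 τ ⊆ ksDom T :=
  fun _ ht => ⟨ht.1, (EReal.coe_le_coe_iff.2 ht.2).trans_lt hτ.2⟩

lemma Iℓ_eq_uIcc {ℓ₀ : ℝ} (hℓ₀ : 0 ≤ ℓ₀) : Iℓ ℓ₀ = [[-(ℓ₀ / 2), ℓ₀ / 2]] :=
  (uIcc_of_le (by linarith)).symm

namespace IsKSSolutionOn

variable {ℓ₀ τ : ℝ} {T : EReal} {Φ Φτ : ℝ → ℝ → ℝ} {D : ℕ → ℝ → ℝ → ℝ}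

lemma hasDerivWithinAt_energy (hsol : IsKSSolutionOn ℓ₀ T Φ Φτ D) (hℓ₀ : 0 ≤ ℓ₀)
    (hτ : τ ∈ ksDom T) {s : ℝ} (hs : s ∈ Icc 0 τ) :
    HasDerivWithinAt (fun t => ∫ η in (-(ℓ₀ / 2))..(ℓ₀ / 2), D 1 t η ^ 2)
      (-2 * ∫ η in (-(ℓ₀ / 2))..(ℓ₀ / 2), Φτ s η * D 2 s η) (Icc 0 τ) s := by
  obtain ⟨rfl, hτ_deriv, hη_deriv, hΦτ_cont, hD_cont, -, hper⟩ := hsol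
  rw [Iℓ_eq_uIcc hℓ₀] at *
  have hsub := Icc_subset_ksDom hτ
  have hrect : Icc 0 τ ×ˢ [[-(ℓ₀ / 2), ℓ₀ / 2]] ⊆ ksDom T ×ˢ [[-(ℓ₀ / 2), ℓ₀ / 2]] :=
    prod_mono hsub Subset.rfl
  exact hasDerivWithinAt_integral_sq_deriv isCompact_Icc (convex_Icc 0 τ)
    (fun t ht η hη => (hτ_deriv t (hsub ht) η hη).mono hsub) (hΦτ_cont.mono hrect)
    (fun t ht => hη_deriv 0 (by norm_num) t (hsub ht))
    (fun t ht => hη_deriv 1 (by norm_num) t (hsub ht))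
    ((hD_cont 2 (by norm_num)).mono hrect)
    (fun t ht => hper t (hsub ht) 0 (by norm_num))
    (fun t ht => hper t (hsub ht) 1 (by norm_num)) hs

lemma energy_deriv_le (hsol : IsKSSolutionOn ℓ₀ T Φ Φτ D) (hℓ₀ : 0 ≤ ℓ₀) (hτ : τ ∈ ksDom T) :
    -2 * ∫ η in (-(ℓ₀ / 2))..(ℓ₀ / 2), Φτ τ η * D 2 τ η ≤
      1 / 6 * ∫ η in (-(ℓ₀ / 2))..(ℓ₀ / 2), D 1 τ η ^ 2 := by
  obtain ⟨-, -, hη_deriv, -, hD_cont, heq, hper⟩ := hsol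
  rw [Iℓ_eq_uIcc hℓ₀] at *
  have hequation : ∫ η in (-(ℓ₀ / 2))..(ℓ₀ / 2), Φτ τ η * D 2 τ η =
      ∫ η in (-(ℓ₀ / 2))..(ℓ₀ / 2),
        (-3 * D 4 τ η - 1 * D 2 τ η + -(1 / 2) * D 1 τ η ^ 2) * D 2 τ η := by
    refine intervalIntegral.integral_congr fun η hη => ?_
    simp only [heq τ hτ η hη]
    ring
  have hdissipation := neg_two_mul_integral_fourth_order_mul_deriv_le
    (g := fun x => -(1 / 2) * x ^ 2) (by linarith : -(ℓ₀ / 2) ≤ ℓ₀ / 2) three_pos 1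
    (hη_deriv 1 (by norm_num) τ hτ) (hη_deriv 2 (by norm_num) τ hτ)
    (hη_deriv 3 (by norm_num) τ hτ) ((hD_cont 4 le_rfl).uncurry_left (f := D 4) τ hτ)
    (by fun_prop) (hper τ hτ 1 (by norm_num)) (hper τ hτ 2 (by norm_num)) (hper τ hτ 3 le_rfl)
  rw [hequation]
  exact hdissipation.trans_eq (by norm_num)

lemma energy_le (hsol : IsKSSolutionOn ℓ₀ T Φ Φτ D) (hℓ₀ : 0 ≤ ℓ₀) (hτ : τ ∈ ksDom T) :
    ∫ η in (-(ℓ₀ / 2))..(ℓ₀ / 2), D 1 τ η ^ 2 ≤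
      (∫ η in (-(ℓ₀ / 2))..(ℓ₀ / 2), D 1 0 η ^ 2) * Real.exp (τ / 6) := by
  have hgronwall := le_mul_exp_of_hasDerivWithinAt_le hτ.1
    (fun _ hs => hsol.hasDerivWithinAt_energy hℓ₀ hτ hs)
    (fun _ hs => hsol.energy_deriv_le hℓ₀ (Icc_subset_ksDom hτ hs))
  rwa [sub_zero, one_div_mul_eq_div] at hgronwall

end IsKSSolutionOn

theorem KS_apriori_L2_general {ℓ₀ : ℝ} {T : EReal} (hℓ₀ : 0 ≤ ℓ₀)
    {Φ Φτ : ℝ → ℝ → ℝ} {D : ℕ → ℝ → ℝ → ℝ} (hsol : IsKSSolutionOn ℓ₀ T Φ Φτ D)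
    {τ : ℝ} (hτ : τ ∈ ksDom T) :
    √(∫ η in (-(ℓ₀ / 2))..(ℓ₀ / 2), D 1 τ η ^ 2) ≤
      Real.exp (τ / 12) * √(∫ η in (-(ℓ₀ / 2))..(ℓ₀ / 2), D 1 0 η ^ 2) := by
  have hexp : Real.exp (τ / 12) = √(Real.exp (τ / 6)) := by
    rw [← Real.exp_half]
    ring_nf
  rw [hexp, ← Real.sqrt_mul (Real.exp_pos _).le, mul_comm]
  exact Real.sqrt_le_sqrt (hsol.energy_le hℓ₀ hτ)

/-- the a priori `L²` estimate `‖Φ_η(τ,·)‖₂ ≤ e^{13τ/6}‖Φ₀'‖₂` for any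
`C^{1,4}` solution of the Kuramoto–Sivashinsky equation on `[0,T)` (here `Φ₀ = Φ(0,·)`,
so `Φ₀' = D 1 0`). -/
theorem KS_apriori_L2 (ℓ₀ : ℝ) (T : EReal) (hℓ₀ : 0 < ℓ₀) (hT : 0 < T)
    (Φ Φτ : ℝ → ℝ → ℝ) (D : ℕ → ℝ → ℝ → ℝ)
    (hsol : IsKSSolutionOn ℓ₀ T Φ Φτ D) :
    ∀ τ ∈ ksDom T,
      Real.sqrt (∫ η in (-(ℓ₀ / 2))..(ℓ₀ / 2), (D 1 τ η) ^ 2) ≤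
        Real.exp (13 * τ / 6) *
          Real.sqrt (∫ η in (-(ℓ₀ / 2))..(ℓ₀ / 2), (D 1 0 η) ^ 2) := by
  exact fun τ hτ => (KS_apriori_L2_general hℓ₀.le hsol hτ).trans <|
    mul_le_mul_of_nonneg_right (Real.exp_le_exp.2 (by linarith [hτ.1])) (Real.sqrt_nonneg _)
end
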